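/- arXiv:2504.00331 — 7 statements merged into one kernel-verified Lean document; each statement's English description precedes it below -/
import Mathlib

section
/- There exists an arithmetic function h : ℕ → ℝ such that ∑_{n≥1} |h(n)| n^{-σ} converges for every σ > 1/2, and for every complex s with Re s > 1 one has ∑_{m₁,m₂ ≥ 1, m₁m₂ a perfect cube} s(m₁,m₂)/(m₁m₂)^s = ζ(3s−1)⁴ · ζ(6s−3) · ∑_{n≥1} h(n) n^{-s}, where ζ is the Riemann zeta function. -/
open scoped Classical

/-- `numSubgroups m₁ m₂` is the number of subgroups of the additive group
`ℤ_{m₁} × ℤ_{m₂}`. -/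
noncomputable def numSubgroups (m₁ m₂ : ℕ) : ℕ :=
  Nat.card (AddSubgroup (ZMod m₁ × ZMod m₂))

/-- The subgroup of `G × G'` attached to `K ≤ G`, `L ≤ G'` and `φ : K → G' / L`. -/
def subOfTriple {G G' : Type} [AddCommGroup G] [AddCommGroup G']
    (t : Σ (K : AddSubgroup G) (L : AddSubgroup G'), (K →+ G' ⧸ L)) : AddSubgroup (G × G') where
  carrier := {x | ∃ h : x.1 ∈ t.1, t.2.2 ⟨x.1, h⟩ = QuotientAddGroup.mk x.2}
  zero_mem' := ⟨t.1.zero_mem, by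
    have : (⟨(0 : G × G').1, t.1.zero_mem⟩ : t.1) = 0 := rfl
    rw [this, map_zero]; rfl⟩
  add_mem' := by
    rintro ⟨a, b⟩ ⟨c, d⟩ ⟨h1, h2⟩ ⟨h3, h4⟩
    refine ⟨t.1.add_mem h1 h3, ?_⟩
    have : (⟨((a, b) + (c, d) : G × G').1, t.1.add_mem h1 h3⟩ : t.1) = ⟨a, h1⟩ + ⟨c, h3⟩ := rfl
    rw [this, map_add]
    simp only at h2 h4
    rw [h2, h4]; rfl
  neg_mem' := by
    rintro ⟨a, b⟩ ⟨h1, h2⟩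
    refine ⟨t.1.neg_mem h1, ?_⟩
    have : (⟨(-(a, b) : G × G').1, t.1.neg_mem h1⟩ : t.1) = -⟨a, h1⟩ := rfl
    rw [this, map_neg]
    simp only at h2
    rw [h2]; rfl

lemma mem_subOfTriple {G G' : Type} [AddCommGroup G] [AddCommGroup G']
    (K : AddSubgroup G) (L : AddSubgroup G') (φ : K →+ G' ⧸ L) (x : G) (y : G') :
    (x, y) ∈ subOfTriple ⟨K, L, φ⟩ ↔ ∃ h : x ∈ K, φ ⟨x, h⟩ = QuotientAddGroup.mk y := Iff.rfl

lemma subOfTriple_injective {G G' : Type} [AddCommGroup G] [AddCommGroup G'] :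
    Function.Injective (subOfTriple (G := G) (G' := G')) := by
  rintro ⟨K, L, φ⟩ ⟨K', L', φ'⟩ h
  have hm : ∀ x y, (∃ h : x ∈ K, φ ⟨x, h⟩ = QuotientAddGroup.mk y) ↔
      (∃ h : x ∈ K', φ' ⟨x, h⟩ = QuotientAddGroup.mk y) := by
    intro x y
    rw [← mem_subOfTriple, ← mem_subOfTriple, h]
  have hK : K = K' := by
    ext x
    constructor
    · intro hx
      obtain ⟨y, hy⟩ := QuotientAddGroup.mk_surjective (φ ⟨x, hx⟩)
      exact ((hm x y).1 ⟨hx, hy.symm⟩).1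
    · intro hx
      obtain ⟨y, hy⟩ := QuotientAddGroup.mk_surjective (φ' ⟨x, hx⟩)
      exact ((hm x y).2 ⟨hx, hy.symm⟩).1
  subst hK
  have hL : L = L' := by
    ext y
    have h0 := hm 0 y
    have e : (⟨0, K.zero_mem⟩ : K) = 0 := rfl
    constructor
    · intro hy
      obtain ⟨_, h2⟩ := h0.1 ⟨K.zero_mem, by
        rw [e, map_zero]; exact ((QuotientAddGroup.eq_zero_iff y).2 hy).symm⟩
      rw [e, map_zero] at h2
      exact (QuotientAddGroup.eq_zero_iff y).1 h2.symm
    · intro hy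
      obtain ⟨_, h2⟩ := h0.2 ⟨K.zero_mem, by
        rw [e, map_zero]; exact ((QuotientAddGroup.eq_zero_iff y).2 hy).symm⟩
      rw [e, map_zero] at h2
      exact (QuotientAddGroup.eq_zero_iff y).1 h2.symm
  subst hL
  have : φ = φ' := by
    ext ⟨x, hx⟩
    obtain ⟨y, hy⟩ := QuotientAddGroup.mk_surjective (φ ⟨x, hx⟩)
    obtain ⟨_, h2⟩ := (hm x y).1 ⟨hx, hy.symm⟩
    rw [h2, hy]
  rw [this]

lemma subOfTriple_surjective {G G' : Type} [AddCommGroup G] [AddCommGroup G'] :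
    Function.Surjective (subOfTriple (G := G) (G' := G')) := by
  intro H
  let K : AddSubgroup G := H.map (AddMonoidHom.fst G G')
  let L : AddSubgroup G' := H.comap (AddMonoidHom.inr G G')
  have hL : ∀ y, y ∈ L ↔ (0, y) ∈ H := fun y => Iff.rfl
  have hK : ∀ x : K, ∃ y, (x.1, y) ∈ H := by
    rintro ⟨x, ⟨⟨a, b⟩, hab, rfl⟩⟩
    exact ⟨b, hab⟩
  choose f hf using hK
  have key : ∀ x y y', (x, y) ∈ H → (x, y') ∈ H →
      (QuotientAddGroup.mk y : G' ⧸ L) = QuotientAddGroup.mk y' := by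
    intro x y y' h1 h2
    rw [QuotientAddGroup.eq, hL]
    have := H.add_mem (H.neg_mem h1) h2
    simpa using this
  let φ : K →+ G' ⧸ L := AddMonoidHom.mk' (fun x => QuotientAddGroup.mk (f x)) (by
    intro a b
    refine key (a.1 + b.1) _ (f a + f b) (hf (a + b)) ?_
    exact H.add_mem (hf a) (hf b))
  refine ⟨⟨K, L, φ⟩, ?_⟩
  ext ⟨x, y⟩
  rw [mem_subOfTriple]
  constructor
  · rintro ⟨hx, h⟩
    have h' : (QuotientAddGroup.mk (f ⟨x, hx⟩) : G' ⧸ L) = QuotientAddGroup.mk y := h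
    rw [QuotientAddGroup.eq, hL] at h'
    have := H.add_mem (hf ⟨x, hx⟩) h'
    simpa using this
  · intro h
    have hx : x ∈ K := ⟨(x, y), h, rfl⟩
    exact ⟨hx, key x _ _ (hf ⟨x, hx⟩) h⟩

lemma sum_addSubgroup_cyclic {A : Type} [AddCommGroup A] [Finite A] [Fintype (AddSubgroup A)]
    [IsAddCyclic A] (F : ℕ → ℕ) :
    ∑ K : AddSubgroup A, F (Nat.card K) = ∑ d ∈ (Nat.card A).divisors, F d := by
  have key : ∀ K : AddSubgroup A, K = (nsmulAddMonoidHom (Nat.card K) : A →+ A).ker := by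
    intro K
    apply AddSubgroup.eq_of_le_of_card_ge
    · intro x hx
      rw [AddMonoidHom.mem_ker]
      have := card_nsmul_eq_zero' (x := (⟨x, hx⟩ : K))
      exact congrArg Subtype.val this
    · rw [IsAddCyclic.card_nsmulAddMonoidHom_ker]
      exact Nat.gcd_le_right _ Nat.card_pos
  refine Finset.sum_bij (fun K _ => Nat.card K) ?_ ?_ ?_ ?_
  · intro K _
    rw [Nat.mem_divisors]
    exact ⟨AddSubgroup.card_addSubgroup_dvd_card K, Nat.card_pos.ne'⟩
  · intro K _ K' _ h
    rw [key K, key K', h]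
  · intro d hd
    refine ⟨(nsmulAddMonoidHom d : A →+ A).ker, Finset.mem_univ _, ?_⟩
    rw [IsAddCyclic.card_nsmulAddMonoidHom_ker]
    exact Nat.gcd_eq_right (Nat.dvd_of_mem_divisors hd)
  · intro K _; rfl

lemma card_hom_cyclic {A B : Type} [AddCommGroup A] [AddCommGroup B] [Finite A] [Finite B]
    [hA : IsAddCyclic A] [IsAddCyclic B] :
    Nat.card (A →+ B) = (Nat.card A).gcd (Nat.card B) := by
  have e1 : (A →+ B) ≃ (ZMod (Nat.card A) →+ B) :=
    { toFun := fun f => f.comp (zmodAddCyclicAddEquiv hA).toAddMonoidHom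
      invFun := fun f => f.comp (zmodAddCyclicAddEquiv hA).symm.toAddMonoidHom
      left_inv := by intro f; ext x; simp
      right_inv := by intro f; ext x; simp }
  have e2 : { f : ℤ →+ B // f (Nat.card A : ℤ) = 0 } ≃
      (nsmulAddMonoidHom (Nat.card A) : B →+ B).ker :=
    (zmultiplesHom B).symm.subtypeEquiv (by
      intro f
      rw [AddMonoidHom.mem_ker]
      have : f (Nat.card A : ℤ) = Nat.card A • f 1 := by
        rw [← map_nsmul]; simp
      simp [this])
  rw [Nat.card_congr e1, Nat.card_congr (ZMod.lift (Nat.card A)).symm, Nat.card_congr e2,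
    IsAddCyclic.card_nsmulAddMonoidHom_ker, Nat.gcd_comm]

lemma numSubgroups_eq (m n : ℕ) (hm : 0 < m) (hn : 0 < n) :
    numSubgroups m n = ∑ a ∈ m.divisors, ∑ b ∈ n.divisors, a.gcd b := by
  have : NeZero m := ⟨hm.ne'⟩
  have : NeZero n := ⟨hn.ne'⟩
  unfold numSubgroups
  rw [← Nat.card_congr (Equiv.ofBijective _
    ⟨subOfTriple_injective (G := ZMod m) (G' := ZMod n), subOfTriple_surjective⟩)]
  have : ∀ (K : AddSubgroup (ZMod m)) (L : AddSubgroup (ZMod n)), Finite (K →+ ZMod n ⧸ L) :=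
    fun K L => DFunLike.finite _
  rw [Nat.card_sigma]
  have h1 : ∀ K : AddSubgroup (ZMod m),
      Nat.card (Σ L : AddSubgroup (ZMod n), (K →+ ZMod n ⧸ L))
        = ∑ b ∈ n.divisors, (Nat.card K).gcd b := by
    intro K
    rw [Nat.card_sigma]
    have h2 : ∀ L : AddSubgroup (ZMod n), Nat.card (K →+ ZMod n ⧸ L)
        = (Nat.card K).gcd (n / Nat.card L) := by
      intro L
      have : IsAddCyclic (ZMod n ⧸ L) :=
        isAddCyclic_of_surjective (QuotientAddGroup.mk' L) (QuotientAddGroup.mk'_surjective L)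
      rw [card_hom_cyclic]
      congr 1
      have := AddSubgroup.card_eq_card_quotient_mul_card_addSubgroup L
      rw [Nat.card_zmod] at this
      exact (Nat.div_eq_of_eq_mul_left Nat.card_pos this).symm
    simp_rw [h2]
    rw [sum_addSubgroup_cyclic (fun d => (Nat.card K).gcd (n / d)), Nat.card_zmod]
    exact Nat.sum_div_divisors n (fun d => (Nat.card K).gcd d)
  simp_rw [h1]
  rw [sum_addSubgroup_cyclic (fun d => ∑ b ∈ n.divisors, d.gcd b), Nat.card_zmod]

open ArithmeticFunction PowerSeries in
/-- The Bell series of an arithmetic function at `p`. -/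
noncomputable def bell (f : ArithmeticFunction ℤ) (p : ℕ) : PowerSeries ℤ :=
  PowerSeries.mk fun k => f (p ^ k)

lemma bell_mul (f g : ArithmeticFunction ℤ) (p : ℕ) (hp : p.Prime) :
    bell (f * g) p = bell f p * bell g p := by
  ext k
  rw [bell, PowerSeries.coeff_mk, PowerSeries.coeff_mul, ArithmeticFunction.mul_apply,
    Nat.sum_divisorsAntidiagonal (fun x y => f x * g y), Nat.sum_divisors_prime_pow hp,
    Finset.Nat.sum_antidiagonal_eq_sum_range_succ_mk]
  refine Finset.sum_congr rfl fun i hi => ?_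
  have hi' : i ≤ k := Nat.lt_succ_iff.1 (Finset.mem_range.1 hi)
  simp only [bell, PowerSeries.coeff_mk]
  rw [Nat.pow_div hi' hp.pos]

lemma bell_one (p : ℕ) (hp : p.Prime) : bell 1 p = 1 := by
  ext k
  rw [bell, PowerSeries.coeff_mk, ArithmeticFunction.one_apply, PowerSeries.coeff_one]
  simp [hp.ne_one]

lemma bell_pow (f : ArithmeticFunction ℤ) (p : ℕ) (hp : p.Prime) (n : ℕ) :
    bell (f ^ n) p = bell f p ^ n := by
  induction n with
  | zero => simp [bell_one p hp]
  | succ n ih => rw [pow_succ, pow_succ, bell_mul _ _ _ hp, ih]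

/-- The constant function one. -/
def zetaZ : ArithmeticFunction ℤ := ⟨fun n => if n = 0 then 0 else 1, by simp⟩
/-- The identity function. -/
def idZ : ArithmeticFunction ℤ := ⟨fun n => (n : ℤ), by simp⟩
/-- The cube function. -/
def cubeZ : ArithmeticFunction ℤ := ⟨fun n => (n : ℤ) ^ 3, by simp⟩
/-- The totient function. -/
def phiZ : ArithmeticFunction ℤ := ⟨fun n => (Nat.totient n : ℤ), by simp⟩
/-- `u` transported to squares. -/
noncomputable def sqZ (u : ArithmeticFunction ℤ) : ArithmeticFunction ℤ :=
  ⟨fun n => if IsSquare n then u (Nat.sqrt n) else 0, by simp⟩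

lemma zetaZ_mult : zetaZ.IsMultiplicative := by
  rw [ArithmeticFunction.IsMultiplicative.iff_ne_zero]
  refine ⟨by simp [zetaZ], fun {m n} hm hn _ => by simp [zetaZ, hm, hn]⟩
lemma idZ_mult : idZ.IsMultiplicative :=
  ⟨by simp [idZ], fun {m n} _ => by simp [idZ]⟩
lemma cubeZ_mult : cubeZ.IsMultiplicative :=
  ⟨by simp [cubeZ], fun {m n} _ => by simp [cubeZ, mul_pow]⟩
lemma phiZ_mult : phiZ.IsMultiplicative :=
  ⟨by simp [phiZ], fun {m n} h => by simp [phiZ, Nat.totient_mul h]⟩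

lemma isSquare_mul_iff_coprime {m n : ℕ} (h : m.Coprime n) :
    IsSquare (m * n) ↔ IsSquare m ∧ IsSquare n := by
  constructor
  · rintro ⟨c, hc⟩
    have h1 : ∀ a b : ℕ, a.Coprime b → a * b = c * c → IsSquare a := by
      intro a b hab he
      obtain ⟨d, hd⟩ := exists_associated_pow_of_mul_eq_pow (k := 2)
        (by rw [Nat.isUnit_iff]; exact hab) (by rw [he, sq] : a * b = c ^ 2)
      rw [associated_iff_eq] at hd
      exact ⟨d, by rw [← hd, sq]⟩
    exact ⟨h1 m n h hc, h1 n m h.symm (by rw [mul_comm, hc])⟩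
  · rintro ⟨h1, h2⟩
    exact h1.mul h2

lemma sqZ_mult (u : ArithmeticFunction ℤ) (hu : u.IsMultiplicative) :
    (sqZ u).IsMultiplicative := by
  refine ⟨by simp [sqZ, hu.map_one], fun {m n} h => ?_⟩
  simp only [sqZ, ArithmeticFunction.coe_mk, isSquare_mul_iff_coprime h]
  by_cases hm : IsSquare m
  · by_cases hn : IsSquare n
    · simp only [hm, hn, and_self, if_true]
      obtain ⟨a, rfl⟩ := hm
      obtain ⟨b, rfl⟩ := hn
      rw [show a * a * (b * b) = (a * b) * (a * b) by ring, Nat.sqrt_eq, Nat.sqrt_eq, Nat.sqrt_eq]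
      exact hu.map_mul_of_coprime (Nat.Coprime.coprime_mul_left (Nat.Coprime.coprime_mul_left_right h))
    · simp [hn]
  · simp [hm]

lemma isSquare_prime_pow {p : ℕ} (hp : p.Prime) (k : ℕ) : IsSquare (p ^ k) ↔ Even k := by
  constructor
  · rintro ⟨c, hc⟩
    have := congrArg (fun n => n.factorization p) hc
    simp only [← sq, Nat.factorization_pow, Finsupp.smul_apply, hp.factorization_self] at this
    exact ⟨c.factorization p, by simp at this; omega⟩
  · intro h; exact h.isSquare_pow p

lemma sqZ_even (u : ArithmeticFunction ℤ) {p : ℕ} (j : ℕ) : 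
    sqZ u (p ^ (2 * j)) = u (p ^ j) := by
  have : p ^ (2 * j) = p ^ j * p ^ j := by ring
  simp only [sqZ, ArithmeticFunction.coe_mk, this, Nat.sqrt_eq]
  rw [if_pos ⟨_, rfl⟩]

lemma sqZ_odd (u : ArithmeticFunction ℤ) {p : ℕ} (hp : p.Prime) (j : ℕ) : 
    sqZ u (p ^ (2 * j + 1)) = 0 := by
  simp only [sqZ, ArithmeticFunction.coe_mk]
  rw [if_neg]
  rw [isSquare_prime_pow hp]
  exact Nat.not_even_two_mul_add_one j

open PowerSeries in
lemma bell_zeta (p : ℕ) (hp : p.Prime) : bell zetaZ p * (1 - X) = 1 := by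
  ext k
  rw [mul_sub, mul_one, map_sub]
  rcases k with _ | k
  · simp [bell, zetaZ]
  · rw [coeff_succ_mul_X]; simp [bell, zetaZ, hp.ne_zero]

open PowerSeries in
lemma bell_id (p : ℕ) (_hp : p.Prime) : bell idZ p * (1 - C (p : ℤ) * X) = 1 := by
  ext k
  rw [mul_sub, mul_one, map_sub, mul_left_comm, coeff_C_mul]
  rcases k with _ | k
  · simp [bell, idZ]
  · rw [coeff_succ_mul_X]; simp [bell, idZ, pow_succ]; ring

open PowerSeries in
lemma bell_sqcube (p : ℕ) (hp : p.Prime) :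
    bell (sqZ cubeZ) p * (1 - C ((p : ℤ) ^ 3) * X ^ 2) = 1 := by
  ext k
  rw [mul_sub, mul_one, map_sub, mul_left_comm, coeff_C_mul, coeff_mul_X_pow']
  simp only [bell, coeff_mk]
  obtain ⟨j, rfl | rfl⟩ := Nat.even_or_odd' k
  · rcases j with _ | j
    · simp [sqZ, cubeZ]
    · rw [show 2 * (j + 1) - 2 = 2 * j by omega, sqZ_even, sqZ_even, if_pos (by omega),
        coeff_one, if_neg (by omega)]
      simp [cubeZ]; ring
  · rcases j with _ | j
    · have := sqZ_odd cubeZ hp 0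
      simp at this
      simp [this, coeff_one]
    · rw [show 2 * (j + 1) + 1 - 2 = 2 * j + 1 by omega, sqZ_odd _ hp, sqZ_odd _ hp, coeff_one]
      simp

open PowerSeries in
lemma bell_sqphi (p : ℕ) (hp : p.Prime) :
    bell (sqZ phiZ) p * (1 - C (p : ℤ) * X ^ 2) = 1 - X ^ 2 := by
  ext k
  rw [mul_sub, mul_one, map_sub, mul_left_comm, coeff_C_mul, coeff_mul_X_pow']
  rw [map_sub, coeff_X_pow, coeff_one]
  simp only [bell, coeff_mk]
  obtain ⟨j, rfl | rfl⟩ := Nat.even_or_odd' k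
  · rcases j with _ | j
    · simp [sqZ, phiZ]
    · rw [show 2 * (j + 1) - 2 = 2 * j by omega, sqZ_even, sqZ_even, if_pos (by omega),
        if_neg (by omega)]
      rcases j with _ | j
      · simp [phiZ, Nat.totient_prime hp]
        rw [Nat.cast_sub hp.one_le]; simp
      · rw [if_neg (by omega)]
        simp [phiZ, Nat.totient_prime_pow_succ hp]; ring
  · rcases j with _ | j
    · have := sqZ_odd phiZ hp 0
      simp at this
      simp [this]
    · rw [show 2 * (j + 1) + 1 - 2 = 2 * j + 1 by omega, sqZ_odd _ hp, sqZ_odd _ hp]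
      simp


/-- Local coefficients of the correcting factor. -/
def rc (p : ℤ) : ℕ → ℤ
  | 0 => 1
  | 1 => 13
  | 2 => 4 - 39 * p - p ^ 2
  | 3 => -15 * p + 35 * p ^ 2 - 16 * p ^ 3
  | 4 => 20 * p ^ 2 - 10 * p ^ 3 + 39 * p ^ 4
  | 5 => -10 * p ^ 3 + 15 * p ^ 4 - 32 * p ^ 5
  | 6 => -23 * p ^ 5 + 9 * p ^ 6
  | 7 => p ^ 5 + 9 * p ^ 6
  | _ => 0

/-- The multiplicative correcting factor. -/
noncomputable def RZ : ArithmeticFunction ℤ :=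
  ⟨fun n => if n = 0 then 0 else n.factorization.prod fun p k => rc p k, by simp⟩

lemma RZ_mult : RZ.IsMultiplicative := by
  rw [ArithmeticFunction.IsMultiplicative.iff_ne_zero]
  refine ⟨by simp [RZ], fun {m n} hm hn h => ?_⟩
  simp only [RZ, ArithmeticFunction.coe_mk, hm, hn, mul_eq_zero, or_self, if_false]
  rw [Nat.factorization_mul_of_coprime h, Finsupp.prod_add_index_of_disjoint]
  simpa using h.disjoint_primeFactors

lemma RZ_prime_pow {p : ℕ} (hp : p.Prime) (k : ℕ) : RZ (p ^ k) = rc p k := by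
  simp only [RZ, ArithmeticFunction.coe_mk, pow_eq_zero_iff', hp.ne_zero, false_and, if_false]
  rw [hp.factorization_pow, Finsupp.prod_single_index]
  rfl

open PowerSeries in
lemma bell_RZ (p : ℕ) (hp : p.Prime) :
    bell RZ p = (1 + C (13 + 4 * (p : ℤ)) * X + C (4 + 13 * (p : ℤ) + 9 * (p : ℤ) ^ 2) * X ^ 2
      + C ((p : ℤ) + 9 * (p : ℤ) ^ 2) * X ^ 3) * (1 - C (p : ℤ) * X) ^ 4 := by
  have h1 : bell RZ p = C (rc p 0) + C (rc p 1) * X + C (rc p 2) * X ^ 2 + C (rc p 3) * X ^ 3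
      + C (rc p 4) * X ^ 4 + C (rc p 5) * X ^ 5 + C (rc p 6) * X ^ 6 + C (rc p 7) * X ^ 7 := by
    ext k
    simp only [bell, coeff_mk, RZ_prime_pow hp, map_add, coeff_C_mul, coeff_X_pow, coeff_X,
      coeff_C]
    rcases k with _ | _ | _ | _ | _ | _ | _ | _ | k
    · simp
    · simp
    · simp
    · simp
    · simp
    · simp
    · simp
    · simp
    · have : ∀ j < 8, ¬ (k + 1 + 1 + 1 + 1 + 1 + 1 + 1 + 1 = j) := by omega
      simp [rc]
  rw [h1]
  simp only [rc, map_add, map_sub, map_mul, map_pow, map_neg, map_one, map_ofNat]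
  ring

open PowerSeries in
/-- Keep every third coefficient. -/
noncomputable def dec (A : PowerSeries ℤ) : PowerSeries ℤ := PowerSeries.mk fun k => coeff (3 * k) A

lemma dec_add (A B : PowerSeries ℤ) : dec (A + B) = dec A + dec B := by
  ext k; simp [dec]

open PowerSeries in
lemma dec_C_mul (a : ℤ) (A : PowerSeries ℤ) : dec (C a * A) = C a * dec A := by
  ext k; simp only [dec, coeff_mk, coeff_C_mul]

open PowerSeries in
lemma dec_mul_X_pow (A : PowerSeries ℤ) (j : ℕ) : dec (A * X ^ (3 * j)) = dec A * X ^ j := by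
  ext k
  simp only [dec, coeff_mk, coeff_mul_X_pow']
  by_cases h : j ≤ k
  · rw [if_pos h, if_pos (by omega)]; congr 2; omega
  · rw [if_neg h, if_neg (by omega)]

open PowerSeries in
lemma dec_X_pow_zero (n : ℕ) (h : ¬ 3 ∣ n) : dec (X ^ n) = 0 := by
  ext k
  simp only [dec, coeff_mk, coeff_X_pow]
  rw [if_neg]; · simp
  rintro rfl; exact h ⟨k, rfl⟩

open PowerSeries in
lemma dec_X_pow (j : ℕ) : dec (X ^ (3 * j)) = X ^ j := by
  ext k
  simp only [dec, coeff_mk, coeff_X_pow]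
  congr 1
  simp

open PowerSeries in
lemma dec_identity (G : PowerSeries ℤ) (p : ℤ)
    (hG : G * (1 - X) ^ 3 * (1 - C p * X ^ 2) = 1 + X) :
    dec G * ((1 - X) ^ 3 * (1 - C (p ^ 3) * X ^ 2)) =
      1 + C (13 + 4 * p) * X + C (4 + 13 * p + 9 * p ^ 2) * X ^ 2
      + C (p + 9 * p ^ 2) * X ^ 3 := by
  have h1 : G * X ^ (3 * 0) + C (-3) * (G * X ^ (3 * 1)) + C (3 - p ^ 3) * (G * X ^ (3 * 2))
      + C (3 * p ^ 3 - 1) * (G * X ^ (3 * 3))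
      + C (-3 * p ^ 3) * (G * X ^ (3 * 4)) + C (p ^ 3) * (G * X ^ (3 * 5))
      = X ^ (3 * 0) + C 4 * X ^ 1 + C (9 + p) * X ^ 2 + C (13 + 4 * p) * X ^ (3 * 1)
        + C (13 + 9 * p + p ^ 2) * X ^ 4 + C (9 + 13 * p + 4 * p ^ 2) * X ^ 5
        + C (4 + 13 * p + 9 * p ^ 2) * X ^ (3 * 2) + C (1 + 9 * p + 13 * p ^ 2) * X ^ 7
        + C (4 * p + 13 * p ^ 2) * X ^ 8 + C (p + 9 * p ^ 2) * X ^ (3 * 3)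
        + C (4 * p ^ 2) * X ^ 10 + C (p ^ 2) * X ^ 11 := by
    simp only [map_add, map_sub, map_mul, map_pow, map_neg, map_one, map_ofNat]
    linear_combination (1 + X + X ^ 2) ^ 3 * (1 + C p * X ^ 2 + C p ^ 2 * X ^ 4) * hG
  have h2 := congrArg dec h1
  simp only [dec_add, dec_C_mul, dec_X_pow] at h2
  simp only [dec_mul_X_pow] at h2
  rw [dec_X_pow_zero 1 (by norm_num), dec_X_pow_zero 2 (by norm_num),
    dec_X_pow_zero 4 (by norm_num), dec_X_pow_zero 5 (by norm_num),
    dec_X_pow_zero 7 (by norm_num), dec_X_pow_zero 8 (by norm_num),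
    dec_X_pow_zero 10 (by norm_num), dec_X_pow_zero 11 (by norm_num)] at h2
  simp only [map_add, map_sub, map_mul, map_pow, map_neg, map_one, map_ofNat] at h2 ⊢
  linear_combination h2

/-- `∑_{m₁ m₂ = n} s(m₁, m₂)`. -/
noncomputable def gZ : ArithmeticFunction ℤ := zetaZ ^ 4 * sqZ phiZ

lemma gZ_mult : gZ.IsMultiplicative := (zetaZ_mult.pow).mul (sqZ_mult _ phiZ_mult)

/-- `∑_{m₁ m₂ = n³} s(m₁, m₂)`. -/
noncomputable def fZ : ArithmeticFunction ℤ := ⟨fun n => gZ (n ^ 3), by simp⟩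

lemma fZ_mult : fZ.IsMultiplicative :=
  ⟨by simp [fZ, gZ_mult.map_one], fun {m n} h => by
    simp only [fZ, ArithmeticFunction.coe_mk, mul_pow]
    exact gZ_mult.map_mul_of_coprime (Nat.Coprime.pow _ _ h)⟩

open PowerSeries in
lemma bell_fZ (p : ℕ) (hp : p.Prime) :
    bell fZ p * ((1 - X) ^ 3 * (1 - C ((p : ℤ) ^ 3) * X ^ 2)) =
      1 + C (13 + 4 * (p : ℤ)) * X + C (4 + 13 * (p : ℤ) + 9 * (p : ℤ) ^ 2) * X ^ 2
      + C ((p : ℤ) + 9 * (p : ℤ) ^ 2) * X ^ 3 := by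
  have h1 : bell fZ p = dec (bell gZ p) := by
    ext k
    simp only [bell, dec, coeff_mk, fZ, ArithmeticFunction.coe_mk]
    rw [← pow_mul, mul_comm]
  rw [h1]
  apply dec_identity
  have hne : (1 - X : PowerSeries ℤ) ≠ 0 := by
    intro h
    have := congrArg constantCoeff h
    simp at this
  apply mul_right_cancel₀ hne
  rw [gZ, bell_mul _ _ _ hp, bell_pow _ _ hp]
  have hz := bell_zeta p hp
  have hphi := bell_sqphi p hp
  calc _ = (bell zetaZ p * (1 - X)) ^ 4 * (bell (sqZ phiZ) p * (1 - C (p : ℤ) * X ^ 2)) := by ring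
    _ = _ := by rw [hz, hphi]; ring

open PowerSeries in
lemma fZ_eq : fZ = idZ ^ 4 * sqZ cubeZ * (zetaZ ^ 3 * RZ) := by
  rw [ArithmeticFunction.IsMultiplicative.eq_iff_eq_on_prime_powers _ fZ_mult _
    (((idZ_mult.pow).mul (sqZ_mult _ cubeZ_mult)).mul ((zetaZ_mult.pow).mul RZ_mult))]
  intro p i hp
  suffices h : bell fZ p = bell (idZ ^ 4 * sqZ cubeZ * (zetaZ ^ 3 * RZ)) p by
    have := congrArg (coeff i) h
    simpa only [bell, coeff_mk] using this
  have hne : ((1 - X) ^ 3 * (1 - C ((p : ℤ) ^ 3) * X ^ 2) : PowerSeries ℤ) ≠ 0 := by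
    intro h
    have := congrArg constantCoeff h
    simp at this
  apply mul_right_cancel₀ hne
  rw [bell_fZ p hp]
  rw [bell_mul _ _ _ hp, bell_mul _ _ _ hp, bell_mul _ _ _ hp, bell_pow _ _ hp, bell_pow _ _ hp,
    bell_RZ p hp]
  have hz := bell_zeta p hp
  have hid := bell_id p hp
  have hc := bell_sqcube p hp
  generalize (1 + C (13 + 4 * (p : ℤ)) * X + C (4 + 13 * (p : ℤ) + 9 * (p : ℤ) ^ 2) * X ^ 2
      + C ((p : ℤ) + 9 * (p : ℤ) ^ 2) * X ^ 3 : PowerSeries ℤ) = Q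
  symm
  calc _ = (bell idZ p * (1 - C (p : ℤ) * X)) ^ 4 *
        (bell (sqZ cubeZ) p * (1 - C ((p : ℤ) ^ 3) * X ^ 2)) * (bell zetaZ p * (1 - X)) ^ 3 * Q := by
        ring
    _ = Q := by rw [hz, hid, hc]; ring

/-- Indicator of `d`. -/
def dl (d : ℕ) : ArithmeticFunction ℤ := ⟨fun n => if n = d ∧ n ≠ 0 then 1 else 0, by simp⟩

lemma dl_mul (d e : ℕ) (hd : d ≠ 0) (he : e ≠ 0) : dl d * dl e = dl (d * e) := by
  ext n
  rw [ArithmeticFunction.mul_apply]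
  simp only [dl, ArithmeticFunction.coe_mk]
  by_cases hn : n = d * e
  · subst hn
    rw [Finset.sum_eq_single (d, e)]
    · simp [hd, he]
    · rintro ⟨a, b⟩ _ hab
      simp only [ne_eq, Prod.mk.injEq] at hab
      by_cases h1 : a = d
      · have h2 : b ≠ e := fun h => hab ⟨h1, h⟩
        simp [h2]
      · simp [h1]
    · intro h
      exact absurd (by simp [hd, he]) h
  · rw [if_neg (by tauto)]
    apply Finset.sum_eq_zero
    rintro ⟨a, b⟩ hab
    rw [Nat.mem_divisorsAntidiagonal] at hab
    by_cases h1 : a = d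
    · have h2 : b ≠ e := by rintro rfl; subst h1; exact hn hab.1.symm
      simp [h2]
    · simp [h1]

lemma zetaZ_mul_apply (f : ArithmeticFunction ℤ) (n : ℕ) :
    (f * zetaZ) n = ∑ i ∈ n.divisors, f i := by
  rw [ArithmeticFunction.mul_apply, Nat.sum_divisorsAntidiagonal (fun x y => f x * zetaZ y)]
  refine Finset.sum_congr rfl fun i hi => ?_
  have : n / i ≠ 0 := (Nat.div_pos (Nat.divisor_le hi) (Nat.pos_of_mem_divisors hi)).ne'
  simp [zetaZ, this]

lemma dl_zeta (d n : ℕ) (hd : d ≠ 0) (hn : n ≠ 0) :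
    (dl d * zetaZ) n = if d ∣ n then 1 else 0 := by
  rw [zetaZ_mul_apply]
  simp only [dl, ArithmeticFunction.coe_mk]
  by_cases h : d ∣ n
  · rw [if_pos h, Finset.sum_eq_single d]
    · simp [hd]
    · intro b _ hb; simp [hb]
    · intro h'; exact absurd (Nat.mem_divisors.2 ⟨h, hn⟩) h'
  · rw [if_neg h]
    apply Finset.sum_eq_zero
    intro b hb
    have : b ≠ d := by rintro rfl; exact h (Nat.dvd_of_mem_divisors hb)
    simp [this]

lemma gcd_eq_sum (N a b : ℕ) (ha : a ≠ 0) (hN : a ≤ N) :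
    ((a.gcd b : ℕ) : ℤ) = ∑ d ∈ Finset.Icc 1 N, (Nat.totient d : ℤ) *
      ((if d ∣ a then 1 else 0) * (if d ∣ b then 1 else 0)) := by
  have h0 : a.gcd b ≠ 0 := fun h => ha (Nat.gcd_eq_zero_iff.1 h).1
  conv_lhs => rw [← Nat.sum_totient (a.gcd b)]
  push_cast
  have : ∀ d, ((Nat.totient d : ℤ) * ((if d ∣ a then 1 else 0) * (if d ∣ b then 1 else 0)))
      = if d ∣ a ∧ d ∣ b then (Nat.totient d : ℤ) else 0 := by
    intro d; by_cases h1 : d ∣ a <;> by_cases h2 : d ∣ b <;> simp [h1, h2]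
  simp_rw [this]
  rw [← Finset.sum_filter]
  refine Finset.sum_congr ?_ fun _ _ => rfl
  ext d
  simp only [Nat.mem_divisors, Nat.dvd_gcd_iff, Finset.mem_filter, Finset.mem_Icc]
  constructor
  · rintro ⟨⟨h1, h2⟩, _⟩
    exact ⟨⟨Nat.pos_of_dvd_of_pos h1 (Nat.pos_of_ne_zero ha),
      (Nat.le_of_dvd (Nat.pos_of_ne_zero ha) h1).trans hN⟩, h1, h2⟩
  · rintro ⟨_, h⟩
    exact ⟨h, h0⟩

lemma gZ_eq (n : ℕ) :
    gZ n = ∑ x ∈ n.divisorsAntidiagonal, (numSubgroups x.1 x.2 : ℤ) := by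
  rcases eq_or_ne n 0 with rfl | hn
  · simp
  have h1 : ∀ x ∈ n.divisorsAntidiagonal, (numSubgroups x.1 x.2 : ℤ) =
      ∑ d ∈ Finset.Icc 1 n, (Nat.totient d : ℤ) *
        ((dl d * zetaZ * zetaZ) x.1 * (dl d * zetaZ * zetaZ) x.2) := by
    intro x hx
    rw [Nat.mem_divisorsAntidiagonal] at hx
    have hx1 : x.1 ≠ 0 := by rintro h; apply hx.2; rw [← hx.1, h, zero_mul]
    have hx2 : x.2 ≠ 0 := by rintro h; apply hx.2; rw [← hx.1, h, mul_zero]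
    have hle : x.1 ≤ n := Nat.le_of_dvd (Nat.pos_of_ne_zero hn) ⟨_, hx.1.symm⟩
    rw [numSubgroups_eq _ _ (Nat.pos_of_ne_zero hx1) (Nat.pos_of_ne_zero hx2)]
    push_cast
    have h2 : ∀ a ∈ x.1.divisors, ∀ b ∈ x.2.divisors, ((a.gcd b : ℕ) : ℤ) =
        ∑ d ∈ Finset.Icc 1 n, (Nat.totient d : ℤ) *
          ((dl d * zetaZ) a * (dl d * zetaZ) b) := by
      intro a ha b hb
      have ha0 := (Nat.pos_of_mem_divisors ha).ne'
      have hb0 := (Nat.pos_of_mem_divisors hb).ne'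
      rw [gcd_eq_sum n a b ha0 ((Nat.divisor_le ha).trans hle)]
      refine Finset.sum_congr rfl fun d hd => ?_
      have hd0 : d ≠ 0 := by have := (Finset.mem_Icc.1 hd).1; omega
      rw [dl_zeta d a hd0 ha0, dl_zeta d b hd0 hb0]
    rw [Finset.sum_congr rfl fun a ha => Finset.sum_congr rfl (h2 a ha)]
    simp_rw [zetaZ_mul_apply (dl _ * zetaZ), Finset.sum_mul_sum, Finset.mul_sum]
    rw [Finset.sum_comm]
    conv_rhs => rw [Finset.sum_comm]
    rw [Finset.sum_comm]
    refine Finset.sum_congr rfl fun a _ => ?_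
    rw [Finset.sum_comm]
  rw [Finset.sum_congr rfl h1, Finset.sum_comm]
  simp_rw [← Finset.mul_sum, ← ArithmeticFunction.mul_apply]
  have h3 : ∀ d ∈ Finset.Icc 1 n, (Nat.totient d : ℤ) *
      (dl d * zetaZ * zetaZ * (dl d * zetaZ * zetaZ)) n =
      ∑ x ∈ n.divisorsAntidiagonal, (Nat.totient d : ℤ) * ((zetaZ ^ 4) x.1 * dl (d * d) x.2) := by
    intro d hd
    have hd0 : d ≠ 0 := by have := (Finset.mem_Icc.1 hd).1; omega
    rw [show dl d * zetaZ * zetaZ * (dl d * zetaZ * zetaZ) = zetaZ ^ 4 * (dl d * dl d) by ring,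
      dl_mul d d hd0 hd0, ArithmeticFunction.mul_apply, Finset.mul_sum]
  rw [Finset.sum_congr rfl h3, Finset.sum_comm, gZ, ArithmeticFunction.mul_apply]
  refine Finset.sum_congr rfl fun x hx => ?_
  rw [Nat.mem_divisorsAntidiagonal] at hx
  have hx2 : x.2 ≠ 0 := by rintro h; apply hx.2; rw [← hx.1, h, mul_zero]
  have hle : x.2 ≤ n := Nat.le_of_dvd (Nat.pos_of_ne_zero hn) ⟨x.1, by rw [mul_comm, hx.1]⟩
  simp_rw [mul_left_comm _ ((zetaZ ^ 4) x.1), ← Finset.mul_sum]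
  congr 1
  simp only [sqZ, dl, ArithmeticFunction.coe_mk, phiZ]
  by_cases hs : IsSquare x.2
  · rw [if_pos hs]
    obtain ⟨c, hc⟩ := hs
    have hc0 : c ≠ 0 := by rintro rfl; simp at hc; exact hx2 hc
    rw [hc, Nat.sqrt_eq, Finset.sum_eq_single c]
    · simp [hc0]
    · intro d _ hdc
      rw [if_neg]; · simp
      rintro ⟨h, _⟩
      exact hdc (Nat.mul_self_inj.1 h).symm
    · intro h
      exfalso; apply h
      rw [Finset.mem_Icc]
      refine ⟨Nat.pos_of_ne_zero hc0, ?_⟩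
      calc c ≤ c * c := Nat.le_mul_self c
        _ ≤ n := hc ▸ hle
  · rw [if_neg hs]
    symm
    apply Finset.sum_eq_zero
    intro d _
    rw [if_neg]; · simp
    rintro ⟨h, _⟩
    exact hs ⟨d, h⟩

lemma summable_of_euler (u b : ℕ → ℝ) (hu : ∀ n, 0 ≤ u n) (h0 : u 0 = 0) (h1 : u 1 = 1)
    (hmul : ∀ {m n : ℕ}, m.Coprime n → u (m * n) = u m * u n)
    (hz : ∀ p k : ℕ, p.Prime → 8 ≤ k → u (p ^ k) = 0)
    (hb : Summable b) (hb0 : ∀ n, 0 ≤ b n)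
    (hle : ∀ p : ℕ, p.Prime → ∑ k ∈ Finset.range 8, u (p ^ k) ≤ 1 + b p) : Summable u := by
  have hz' : ∀ p : ℕ, p.Prime → ∀ k ∉ Finset.range 8, u (p ^ k) = 0 := by
    intro p hp k hk
    exact hz p k hp (by simpa using hk)
  apply summable_of_sum_range_le (c := Real.exp (∑' n, b n)) hu
  intro N
  have hP := (EulerProduct.summable_and_hasSum_smoothNumbers_prod_primesBelow_tsum (f := u) h1 hmul
    (fun {p} hp => summable_of_ne_finset_zero (s := Finset.range 8)
      (fun k hk => by rw [hz' p hp k hk, norm_zero])) N).2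
  have hP' : HasSum ((N.smoothNumbers).indicator u) (∏ p ∈ N.primesBelow, ∑' n : ℕ, u (p ^ n)) :=
    hasSum_subtype_iff_indicator.1 hP
  calc ∑ i ∈ Finset.range N, u i
      ≤ ∑ i ∈ Finset.range N, (N.smoothNumbers).indicator u i := by
        apply Finset.sum_le_sum
        intro i hi
        rcases eq_or_ne i 0 with rfl | hi0
        · rw [h0]; exact Set.indicator_nonneg (fun x _ => hu x) _
        · rw [Set.indicator_of_mem]
          exact Nat.mem_smoothNumbers_of_lt (Nat.pos_of_ne_zero hi0) (Finset.mem_range.1 hi)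
    _ ≤ ∏ p ∈ N.primesBelow, ∑' n : ℕ, u (p ^ n) :=
        sum_le_hasSum _ (fun i _ => Set.indicator_nonneg (fun x _ => hu x) _) hP'
    _ ≤ ∏ p ∈ N.primesBelow, Real.exp (b p) := by
        apply Finset.prod_le_prod
        · intro p _; exact tsum_nonneg fun n => hu _
        · intro p hp
          have hp' := Nat.prime_of_mem_primesBelow hp
          rw [tsum_eq_sum (hz' p hp')]
          calc _ ≤ 1 + b p := hle p hp'
            _ ≤ _ := by rw [add_comm]; exact Real.add_one_le_exp _
    _ = Real.exp (∑ p ∈ N.primesBelow, b p) := (Real.exp_sum _ _).symm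
    _ ≤ _ := Real.exp_le_exp.2 (hb.sum_le_tsum _ (fun i _ => hb0 i))

lemma rc_bound (p : ℤ) (hp : 1 ≤ p) (k : ℕ) (hk : 2 ≤ k) : |rc p k| ≤ 100 * p ^ k := by
  have hp0 : 0 ≤ p := by omega
  have q1 : p ≤ p ^ 2 := by nlinarith
  have q2 : p ^ 2 ≤ p ^ 3 := pow_le_pow_right₀ hp (by norm_num)
  have q3 : p ^ 3 ≤ p ^ 4 := pow_le_pow_right₀ hp (by norm_num)
  have q4 : p ^ 4 ≤ p ^ 5 := pow_le_pow_right₀ hp (by norm_num)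
  have q5 : p ^ 5 ≤ p ^ 6 := pow_le_pow_right₀ hp (by norm_num)
  have q6 : p ^ 6 ≤ p ^ 7 := pow_le_pow_right₀ hp (by norm_num)
  rcases k with _ | _ | _ | _ | _ | _ | _ | _ | k
  · omega
  · omega
  · simp only [rc, zero_add, Nat.reduceAdd]; rw [abs_le]; constructor <;> linarith
  · simp only [rc, zero_add, Nat.reduceAdd]; rw [abs_le]; constructor <;> linarith
  · simp only [rc, zero_add, Nat.reduceAdd]; rw [abs_le]; constructor <;> linarith
  · simp only [rc, zero_add, Nat.reduceAdd]; rw [abs_le]; constructor <;> linarith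
  · simp only [rc, zero_add, Nat.reduceAdd]; rw [abs_le]; constructor <;> linarith
  · simp only [rc, zero_add, Nat.reduceAdd]; rw [abs_le]; constructor <;> linarith
  · simp only [rc, abs_zero]; positivity

lemma RZ_summable (τ : ℝ) (hτ : 3 / 2 < τ) :
    Summable fun n : ℕ => |(RZ n : ℝ)| * (n : ℝ) ^ (-τ) := by
  apply summable_of_euler _
    (fun p => 13 * (p : ℝ) ^ (-τ) + 600 * (p : ℝ) ^ (2 - 2 * τ))
  · intro n; positivity
  · simp
  · simp [RZ_mult.map_one]
  · intro m n h
    rw [RZ_mult.map_mul_of_coprime h]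
    push_cast
    rw [abs_mul, Real.mul_rpow (by positivity) (by positivity)]
    ring
  · intro p k hp hk
    obtain ⟨j, rfl⟩ := Nat.exists_eq_add_of_le' hk
    rw [RZ_prime_pow hp]
    simp [rc]
  · exact ((Real.summable_nat_rpow.2 (by linarith)).mul_left _).add
      ((Real.summable_nat_rpow.2 (by linarith)).mul_left _)
  · intro n; positivity
  · intro p hp
    have hp1 : (1 : ℝ) ≤ p := by exact_mod_cast hp.one_le
    have hp0 : (0 : ℝ) < p := by linarith
    have hb : ∀ k, 2 ≤ k → |(RZ (p ^ k) : ℝ)| * ((p ^ k : ℕ) : ℝ) ^ (-τ)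
        ≤ 100 * (p : ℝ) ^ (2 - 2 * τ) := by
      intro k hk
      rw [RZ_prime_pow hp]
      have h1 : |((rc p k : ℤ) : ℝ)| ≤ 100 * (p : ℝ) ^ k := by
        have := rc_bound p (by exact_mod_cast hp.one_le) k hk
        exact_mod_cast this
      calc _ ≤ 100 * (p : ℝ) ^ k * ((p ^ k : ℕ) : ℝ) ^ (-τ) := by gcongr
        _ = 100 * (p : ℝ) ^ ((k : ℝ) * (1 - τ)) := by
          push_cast
          rw [mul_assoc, ← Real.rpow_natCast, ← Real.rpow_mul hp0.le, ← Real.rpow_add hp0]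
          congr 2; ring
        _ ≤ _ := by
          have hk' : (2 : ℝ) ≤ k := by exact_mod_cast hk
          gcongr 100 * ?_
          apply Real.rpow_le_rpow_of_exponent_le hp1
          nlinarith
    have e0 : |(RZ (p ^ 0) : ℝ)| * ((p ^ 0 : ℕ) : ℝ) ^ (-τ) = 1 := by
      simp [RZ_mult.map_one]
    have e1 : |(RZ (p ^ 1) : ℝ)| * ((p ^ 1 : ℕ) : ℝ) ^ (-τ) = 13 * (p : ℝ) ^ (-τ) := by
      rw [RZ_prime_pow hp]; simp [rc]
    simp only [Finset.sum_range_succ, Finset.sum_range_zero]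
    rw [e0, e1]
    have := hb 2 (by norm_num)
    have := hb 3 (by norm_num)
    have := hb 4 (by norm_num)
    have := hb 5 (by norm_num)
    have := hb 6 (by norm_num)
    have := hb 7 (by norm_num)
    linarith

/-- Complex-valued version. -/
noncomputable def cZ (f : ArithmeticFunction ℤ) : ℕ → ℂ := fun n => ((f n : ℤ) : ℂ)

lemma cZ_mul_hasSum {f g : ArithmeticFunction ℤ} {s a b : ℂ} (hf : LSeriesHasSum (cZ f) s a)
    (hg : LSeriesHasSum (cZ g) s b) : LSeriesHasSum (cZ (f * g)) s (a * b) := by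
  have h := ArithmeticFunction.LSeriesHasSum_mul (f := (f : ArithmeticFunction ℂ))
    (g := (g : ArithmeticFunction ℂ)) (s := s) (a := a) (b := b) hf hg
  rw [← ArithmeticFunction.intCoe_mul] at h
  exact h

lemma cZ_pow_hasSum {f : ArithmeticFunction ℤ} {s a : ℂ} (hf : LSeriesHasSum (cZ f) s a) (n : ℕ) :
    LSeriesHasSum (cZ (f ^ (n + 1))) s (a ^ (n + 1)) := by
  induction n with
  | zero => simpa using hf
  | succ n ih => rw [pow_succ, pow_succ a]; exact cZ_mul_hasSum ih hf

lemma zetaZ_hasSum {s : ℂ} (hs : 1 < s.re) : LSeriesHasSum (cZ zetaZ) s (riemannZeta s) := by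
  have h := LSeriesHasSum_one hs
  refine (LSeriesHasSum_congr s _ ?_).1 h
  intro n hn
  simp [cZ, zetaZ, hn]

lemma idZ_hasSum {s : ℂ} (hs : 2 < s.re) : LSeriesHasSum (cZ idZ) s (riemannZeta (s - 1)) := by
  have h := LSeriesHasSum_one (s := s - 1) (by simp; linarith)
  unfold LSeriesHasSum at h ⊢
  convert h using 1
  ext n
  rcases eq_or_ne n 0 with rfl | hn
  · simp
  have hn' : (n : ℂ) ≠ 0 := by exact_mod_cast hn
  rw [LSeries.term_of_ne_zero hn, LSeries.term_of_ne_zero hn, Complex.cpow_sub _ _ hn']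
  simp [cZ, idZ]

lemma sqcube_hasSum {s : ℂ} (hs : 2 < s.re) :
    LSeriesHasSum (cZ (sqZ cubeZ)) s (riemannZeta (2 * s - 3)) := by
  have h := LSeriesHasSum_one (s := 2 * s - 3) (by simp; linarith)
  unfold LSeriesHasSum at h ⊢
  have hinj : Function.Injective (fun k : ℕ => k * k) := fun a b h => Nat.mul_self_inj.1 h
  rw [← hinj.hasSum_iff]
  · convert h using 1
    ext n
    rcases eq_or_ne n 0 with rfl | hn
    · simp
    have hn' : (n : ℂ) ≠ 0 := by exact_mod_cast hn
    rw [Function.comp_apply, LSeries.term_of_ne_zero (by positivity), LSeries.term_of_ne_zero hn,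
      Complex.cpow_sub _ _ hn']
    have e1 : ((n * n : ℕ) : ℂ) ^ s = (n : ℂ) ^ (2 * s) := by
      rw [two_mul, Complex.cpow_add _ _ hn', Nat.cast_mul, Complex.natCast_mul_natCast_cpow]
    have e2 : (n : ℂ) ^ (3 : ℂ) = (n : ℂ) ^ 3 := by
      exact_mod_cast Complex.cpow_natCast (n : ℂ) 3
    rw [e1, e2]
    simp [cZ, sqZ, cubeZ]
  · intro n hn
    rw [LSeries.term_def]
    split_ifs with h0
    · rfl
    · have : ¬ IsSquare n := fun ⟨c, hc⟩ => hn ⟨c, hc.symm⟩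
      simp [cZ, sqZ, this]

/-- The Dirichlet coefficients of `h` in the variable `n ^ 3`. -/
noncomputable def HZ : ArithmeticFunction ℤ := zetaZ ^ 3 * RZ

lemma HZ_summable {s : ℂ} (hs : 3 / 2 < s.re) : LSeriesSummable (cZ HZ) s := by
  have h1 : LSeriesSummable (cZ RZ) s := by
    apply Summable.of_norm
    refine (RZ_summable s.re hs).of_nonneg_of_le (fun _ => norm_nonneg _) (fun n => ?_)
    rw [LSeries.norm_term_eq]
    split_ifs with h
    · positivity
    · rw [Real.rpow_neg (by positivity), div_eq_mul_inv]
      simp [cZ]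
  exact (cZ_mul_hasSum (cZ_pow_hasSum (zetaZ_hasSum (by linarith)) 2) h1.hasSum).summable

lemma fZ_hasSum {s : ℂ} (hs : 2 < s.re) : LSeriesHasSum (cZ fZ) s
    (riemannZeta (s - 1) ^ 4 * riemannZeta (2 * s - 3) * LSeries (cZ HZ) s) := by
  rw [fZ_eq]
  exact cZ_mul_hasSum (cZ_mul_hasSum (cZ_pow_hasSum (idZ_hasSum hs) 3) (sqcube_hasSum hs))
    (HZ_summable (by linarith)).hasSum

lemma cube_inj : Function.Injective (fun m : ℕ => m ^ 3) :=
  Nat.pow_left_injective (n := 3) (by norm_num)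

/-- The arithmetic function `h` of the theorem. -/
noncomputable def hFun : ℕ → ℝ := Function.extend (fun m : ℕ => m ^ 3) (fun m => (HZ m : ℝ)) 0

lemma hFun_cube (m : ℕ) : hFun (m ^ 3) = HZ m := cube_inj.extend_apply _ _ m

lemma hFun_zero {n : ℕ} (hn : n ∉ Set.range (fun m : ℕ => m ^ 3)) : hFun n = 0 :=
  Function.extend_apply' _ _ _ (fun ⟨m, hm⟩ => hn ⟨m, hm⟩)

lemma cube_cpow (m : ℕ) (s : ℂ) : ((m ^ 3 : ℕ) : ℂ) ^ s = (m : ℂ) ^ (3 * s) := by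
  rw [show m ^ 3 = m * m * m by ring, Nat.cast_mul,
    Complex.natCast_mul_natCast_cpow, Nat.cast_mul, Complex.natCast_mul_natCast_cpow]
  rw [show (3 : ℂ) * s = ((3 : ℕ) : ℂ) * s by norm_num, Complex.cpow_nat_mul]
  ring

lemma hFun_summable (σ : ℝ) (hσ : 1 / 2 < σ) : Summable fun n : ℕ => |hFun n| / (n : ℝ) ^ σ := by
  rw [← cube_inj.summable_iff]
  · have h := (HZ_summable (s := ((3 * σ : ℝ) : ℂ)) (by simp; linarith)).norm
    refine h.congr fun m => ?_
    rw [LSeries.norm_term_eq, Function.comp_apply, hFun_cube]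
    split_ifs with h0
    · simp [h0]
    · simp only [cZ, Complex.norm_intCast, Complex.ofReal_re, Nat.cast_pow]
      rw [← Real.rpow_natCast, ← Real.rpow_mul (by positivity)]
      norm_num
  · intro n hn
    simp [hFun_zero hn]

lemma hFun_tsum (s : ℂ) : 
    ∑' n : ℕ, (hFun n : ℂ) / (n : ℂ) ^ s = LSeries (cZ HZ) (3 * s) := by
  rw [LSeries, ← cube_inj.tsum_eq]
  · refine tsum_congr fun m => ?_
    rw [hFun_cube, cube_cpow, LSeries.term_def]
    split_ifs with h0
    · simp [h0]
    · simp [cZ]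
  · intro n hn
    by_contra h
    exact hn (by simp [hFun_zero h])

/-- The general term of the double series. -/
noncomputable def TT (s : ℂ) (p : ℕ × ℕ) : ℂ :=
  if 0 < p.1 ∧ 0 < p.2 ∧ ∃ n : ℕ, p.1 * p.2 = n ^ 3 then
    (numSubgroups p.1 p.2 : ℂ) / ((p.1 * p.2 : ℕ) : ℂ) ^ s
  else 0

lemma TT_of_mem (s : ℂ) (n : ℕ) (x : ℕ × ℕ) (hx : x ∈ (n ^ 3).divisorsAntidiagonal) :
    TT s x = (numSubgroups x.1 x.2 : ℂ) / (n : ℂ) ^ (3 * s) := by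
  rw [Nat.mem_divisorsAntidiagonal] at hx
  have hx1 : x.1 ≠ 0 := by rintro h; apply hx.2; rw [← hx.1, h, zero_mul]
  have hx2 : x.2 ≠ 0 := by rintro h; apply hx.2; rw [← hx.1, h, mul_zero]
  rw [TT, if_pos ⟨Nat.pos_of_ne_zero hx1, Nat.pos_of_ne_zero hx2, n, hx.1⟩, hx.1, cube_cpow]

lemma TT_hasSum (s : ℂ) (hs : 1 < s.re) : HasSum (TT s) (LSeries (cZ fZ) (3 * s)) := by
  have hf : LSeriesSummable (cZ fZ) (3 * s) := (fZ_hasSum (by simp; linarith)).summable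
  let j : (Σ n : ℕ, (n ^ 3).divisorsAntidiagonal) → ℕ × ℕ := fun x => x.2.1
  have hj : Function.Injective j := by
    rintro ⟨n, x, hx⟩ ⟨m, y, hy⟩ h
    have hxy : x = y := h
    subst hxy
    have h1 := (Nat.mem_divisorsAntidiagonal.1 hx).1
    have h2 := (Nat.mem_divisorsAntidiagonal.1 hy).1
    have : n = m := cube_inj (h1.symm.trans h2)
    subst this
    rfl
  rw [← hj.hasSum_iff]
  · have hcast : ∀ n : ℕ, ∑ x ∈ (n ^ 3).divisorsAntidiagonal, numSubgroups x.1 x.2 = fZ n := by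
      intro n
      rw [fZ, ArithmeticFunction.coe_mk, gZ_eq]; push_cast; rfl
    refine HasSum.sigma_of_hasSum (g := fun n => LSeries.term (cZ fZ) (3 * s) n) hf.hasSum ?_ ?_
    · intro n
      have := (n ^ 3).divisorsAntidiagonal.hasSum (TT s)
      suffices h : LSeries.term (cZ fZ) (3 * s) n = ∑ b ∈ (n ^ 3).divisorsAntidiagonal, TT s b by
        rw [h]; exact this
      rw [Finset.sum_congr rfl (TT_of_mem s n), ← Finset.sum_div, LSeries.term_def]
      split_ifs with h0
      · simp [h0]
      · congr 1
        rw [cZ, ← hcast n]; push_cast; rfl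
    · apply Summable.of_norm
      rw [summable_sigma_of_nonneg (fun _ => norm_nonneg _)]
      refine ⟨fun n => Summable.of_finite, ?_⟩
      refine hf.norm.congr fun n => ?_
      have h1 := ((n ^ 3).divisorsAntidiagonal.hasSum (fun x => ‖TT s x‖)).tsum_eq
      refine Eq.trans ?_ h1.symm
      rw [Finset.sum_congr rfl (fun x hx => by rw [TT_of_mem s n x hx, norm_div, Complex.norm_natCast]),
        ← Finset.sum_div, LSeries.term_def]
      split_ifs with h0
      · simp [h0]
      · rw [norm_div]
        congr 1
        rw [cZ, ← hcast n]; push_cast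
        rw [← Nat.cast_sum, Complex.norm_natCast, Nat.cast_sum]
  · intro x hx
    rw [TT, if_neg]
    rintro ⟨h1, h2, n, hn⟩
    apply hx
    exact ⟨⟨n, x, Nat.mem_divisorsAntidiagonal.2 ⟨hn, by rw [← hn]; positivity⟩⟩, rfl⟩

theorem stmt3 : ∃ h : ℕ → ℝ,
    (∀ σ : ℝ, 1 / 2 < σ → Summable fun n : ℕ => |h n| / (n : ℝ) ^ σ) ∧
    ∀ s : ℂ, 1 < s.re →
      (∑' p : ℕ × ℕ,
          if 0 < p.1 ∧ 0 < p.2 ∧ ∃ n : ℕ, p.1 * p.2 = n ^ 3 then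
            (numSubgroups p.1 p.2 : ℂ) / ((p.1 * p.2 : ℕ) : ℂ) ^ s
          else 0)
        = riemannZeta (3 * s - 1) ^ 4 * riemannZeta (6 * s - 3) *
            ∑' n : ℕ, (h n : ℂ) / (n : ℂ) ^ s := by
  refine ⟨hFun, hFun_summable, fun s hs => ?_⟩
  rw [hFun_tsum, show 6 * s - 3 = 2 * (3 * s) - 3 by ring,
    ← (fZ_hasSum (s := 3 * s) (by simp; linarith)).LSeries_eq]
  exact (TT_hasSum s hs).tsum_eq
end

section
/- For every prime p and all nonnegative integers u, v, the number of subgroups of the additive group ℤ_{p^u} × ℤ_{p^v} equals ∑_{u₁=0}^{u} ∑_{u₂=0}^{v} p^{min(u₁,u₂)}, which equals ∑_{j=0}^{min(u,v)} (u+v+1−2j) p^j. -/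
theorem sum_min_eq (p : ℕ) : ∀ u v : ℕ,
    ∑ u₁ ∈ Finset.range (u + 1), ∑ u₂ ∈ Finset.range (v + 1), p ^ min u₁ u₂ =
    ∑ j ∈ Finset.range (min u v + 1), (u + v + 1 - 2 * j) * p ^ j := by
  intro u
  induction u with
  | zero => intro v; simp
  | succ u ih =>
    intro v
    cases v with
    | zero => simp
    | succ v =>
      have h1 : ∀ a, ∑ u₂ ∈ Finset.range (v + 1 + 1), p ^ min (a + 1) u₂
          = p * (∑ u₂ ∈ Finset.range (v + 1), p ^ min a u₂) + 1 := by
        intro a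
        rw [Finset.sum_range_succ', Finset.mul_sum]
        simp [pow_succ, mul_comm]
      rw [Finset.sum_range_succ', Finset.sum_congr rfl (fun a _ => h1 a),
        Finset.sum_add_distrib, ← Finset.mul_sum, ih v, Nat.add_min_add_right,
        Finset.mul_sum, Finset.sum_range_succ' _ (min u v + 1)]
      have h2 : ∀ j, (u + 1 + (v + 1) + 1 - 2 * (j + 1)) * p ^ (j + 1)
          = p * ((u + v + 1 - 2 * j) * p ^ j) := by
        intro j
        have : u + 1 + (v + 1) + 1 - 2 * (j + 1) = u + v + 1 - 2 * j := by omega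
        rw [this]; ring
      rw [Finset.sum_congr rfl (fun j _ => h2 j)]
      simp
      ring

/-- The subgroup generated by `(a,t)` and `(0,b)`. -/
def latS (m n : ℕ) (a b t : ℤ) : AddSubgroup (ZMod m × ZMod n) :=
  AddSubgroup.zmultiples ((a : ZMod m), (t : ZMod n)) ⊔
    AddSubgroup.zmultiples ((0 : ZMod m), (b : ZMod n))

theorem mem_latS {m n : ℕ} {a b t x y : ℤ} :
    ((x : ZMod m), (y : ZMod n)) ∈ latS m n a b t ↔
      ∃ k l : ℤ, (m : ℤ) ∣ x - k * a ∧ (n : ℤ) ∣ y - (k * t + l * b) := by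
  simp only [latS, AddSubgroup.mem_sup, AddSubgroup.mem_zmultiples_iff]
  constructor
  · rintro ⟨_, ⟨k, rfl⟩, _, ⟨l, rfl⟩, h⟩
    refine ⟨k, l, ?_, ?_⟩
    · rw [← ZMod.intCast_eq_intCast_iff_dvd_sub]
      have := congrArg Prod.fst h
      simpa using this
    · rw [← ZMod.intCast_eq_intCast_iff_dvd_sub]
      have := congrArg Prod.snd h
      simpa using this
  · rintro ⟨k, l, h1, h2⟩
    rw [← ZMod.intCast_eq_intCast_iff_dvd_sub] at h1 h2
    refine ⟨_, ⟨k, rfl⟩, _, ⟨l, rfl⟩, ?_⟩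
    ext
    · simpa using h1
    · simpa using h2

theorem latS_fst {m n : ℕ} {a b t x : ℤ} (ha : a ∣ m) :
    (∃ y : ℤ, ((x : ZMod m), (y : ZMod n)) ∈ latS m n a b t) ↔ a ∣ x := by
  simp only [mem_latS]
  constructor
  · rintro ⟨y, k, l, h1, -⟩
    have := ha.trans h1
    have h3 := dvd_add this (Dvd.intro_left k rfl : a ∣ k * a)
    simpa using h3
  · rintro ⟨k, rfl⟩
    exact ⟨k * t, k, 0, by simp [mul_comm], by simp⟩

theorem latS_snd {m n : ℕ} {a b t c y : ℤ} (ha : a ≠ 0) (hm : (m : ℤ) = a * c) (hb : b ∣ n)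
    (hc : b ∣ c * t) :
    (((0 : ℤ) : ZMod m), (y : ZMod n)) ∈ latS m n a b t ↔ b ∣ y := by
  rw [mem_latS]
  constructor
  · rintro ⟨k, l, ⟨r, hr⟩, h2⟩
    have hk : k = -(c * r) := by
      apply mul_left_cancel₀ ha
      rw [hm] at hr
      linarith
    have h3 : b ∣ k * t + l * b := by
      rw [hk]
      refine dvd_add ?_ (Dvd.intro_left l rfl)
      have : -(c * r) * t = c * t * (-r) := by ring
      rw [this]
      exact hc.mul_right _
    have := dvd_add (hb.trans h2) h3
    simpa using this
  · rintro ⟨l, rfl⟩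
    exact ⟨0, l, by simp, by simp [mul_comm]⟩

/-- Parametrisation of the subgroups. -/
def latF (p u v : ℕ) (q : Σ i : Fin (u + 1), Σ j : Fin (v + 1), Fin (p ^ min (i : ℕ) (j : ℕ))) :
    AddSubgroup (ZMod (p ^ u) × ZMod (p ^ v)) :=
  latS (p ^ u) (p ^ v) ((p ^ (u - (q.1 : ℕ)) : ℕ) : ℤ) ((p ^ (q.2.1 : ℕ) : ℕ) : ℤ)
    ((p ^ ((q.2.1 : ℕ) - (q.1 : ℕ)) * (q.2.2 : ℕ) : ℕ) : ℤ)

theorem latF_inj (p : ℕ) (hp : p.Prime) (u v : ℕ) : Function.Injective (latF p u v) := by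
  rintro ⟨⟨i, hi⟩, ⟨j, hj⟩, ⟨s, hs⟩⟩ ⟨⟨i', hi'⟩, ⟨j', hj'⟩, ⟨s', hs'⟩⟩ h
  simp only [latF] at h hs hs'
  have key1 : ∀ i, i < u + 1 → ((p ^ (u - i) : ℕ) : ℤ) ∣ ((p ^ u : ℕ) : ℤ) := by
    intro i hi
    exact_mod_cast pow_dvd_pow p (Nat.sub_le u i)
  have key2 : ∀ j, j < v + 1 → ((p ^ j : ℕ) : ℤ) ∣ ((p ^ v : ℕ) : ℤ) := by
    intro i hi
    exact_mod_cast pow_dvd_pow p (by omega)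
  have key3 : ∀ i, i < u + 1 →
      ((p ^ u : ℕ) : ℤ) = ((p ^ (u - i) : ℕ) : ℤ) * ((p ^ i : ℕ) : ℤ) := by
    intro i hi
    rw [← Nat.cast_mul, ← pow_add]
    congr 2; omega
  have key4 : ∀ i j s : ℕ, ((p ^ j : ℕ) : ℤ) ∣
      ((p ^ i : ℕ) : ℤ) * ((p ^ (j - i) * s : ℕ) : ℤ) := by
    intro i j s
    rw [← Nat.cast_mul, ← mul_assoc, ← pow_add]
    exact_mod_cast (pow_dvd_pow p (by omega)).mul_right s
  have hp0 : ∀ i, ((p ^ i : ℕ) : ℤ) ≠ 0 := by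
    intro i
    exact_mod_cast pow_ne_zero i hp.ne_zero
  have ei : i = i' := by
    have : p ^ (u - i) = p ^ (u - i') := by
      apply Nat.dvd_antisymm
      · have := (latS_fst (n := p ^ v) (b := ((p ^ j : ℕ) : ℤ))
          (t := ((p ^ (j - i) * s : ℕ) : ℤ)) (x := ((p ^ (u - i') : ℕ) : ℤ)) (key1 i hi)).1
          (by rw [h]; exact (latS_fst (key1 i' hi')).2 dvd_rfl)
        exact_mod_cast this
      · have := (latS_fst (n := p ^ v) (b := ((p ^ j' : ℕ) : ℤ))
          (t := ((p ^ (j' - i') * s' : ℕ) : ℤ)) (x := ((p ^ (u - i) : ℕ) : ℤ)) (key1 i' hi')).1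
          (by rw [← h]; exact (latS_fst (key1 i hi)).2 dvd_rfl)
        exact_mod_cast this
    have := Nat.pow_right_injective hp.two_le this
    omega
  subst ei
  have ej : j = j' := by
    have : p ^ j = p ^ j' := by
      apply Nat.dvd_antisymm
      · have := (latS_snd (y := ((p ^ j' : ℕ) : ℤ)) (hp0 _) (key3 i hi) (key2 j hj)
          (key4 i j s)).1
          (by rw [h]; exact (latS_snd (hp0 _) (key3 i hi) (key2 j' hj') (key4 i j' s')).2 dvd_rfl)
        exact_mod_cast this
      · have := (latS_snd (y := ((p ^ j : ℕ) : ℤ)) (hp0 _) (key3 i hi) (key2 j' hj')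
          (key4 i j' s')).1
          (by rw [← h]; exact (latS_snd (hp0 _) (key3 i hi) (key2 j hj) (key4 i j s)).2 dvd_rfl)
        exact_mod_cast this
    exact Nat.pow_right_injective hp.two_le this
  subst ej
  have es : s = s' := by
    have hself : ∀ s : ℕ, ((((p ^ (u - i) : ℕ) : ℤ) : ZMod (p ^ u)),
        (((p ^ (j - i) * s : ℕ) : ℤ) : ZMod (p ^ v))) ∈
        latS (p ^ u) (p ^ v) ((p ^ (u - i) : ℕ) : ℤ) ((p ^ j : ℕ) : ℤ)
          ((p ^ (j - i) * s : ℕ) : ℤ) := by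
      intro s
      rw [mem_latS]
      exact ⟨1, 0, by simp, by simp⟩
    have h1 := hself s
    have h2 := hself s'
    rw [← h] at h2
    have h3 := sub_mem h1 h2
    rw [Prod.mk_sub_mk, sub_self, ← Int.cast_sub, ← Int.cast_zero,
      latS_snd (hp0 _) (key3 i hi) (key2 j hj) (key4 i j s)] at h3
    have hlt : ∀ s, s < p ^ min i j → p ^ (j - i) * s < p ^ j := by
      intro s hs
      calc p ^ (j - i) * s < p ^ (j - i) * p ^ min i j :=
            Nat.mul_lt_mul_of_pos_left hs (pow_pos hp.pos _)
        _ = p ^ j := by rw [← pow_add]; congr 1; omega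
    have h4 : p ^ (j - i) * s' ≡ p ^ (j - i) * s [MOD p ^ j] := by
      rw [Nat.modEq_iff_dvd]; exact h3
    have h5 := h4.eq_of_lt_of_lt (hlt s' hs') (hlt s hs)
    exact (Nat.eq_of_mul_eq_mul_left (pow_pos hp.pos _) h5).symm
  subst es
  rfl

theorem int_subgroup_nat (A : AddSubgroup ℤ) : ∃ a : ℕ, ∀ x : ℤ, x ∈ A ↔ (a : ℤ) ∣ x := by
  obtain ⟨g, hg⟩ := Int.subgroup_cyclic A
  refine ⟨g.natAbs, fun x => ?_⟩
  rw [hg, ← AddSubgroup.zmultiples_eq_closure, Int.mem_zmultiples_iff, Int.natAbs_dvd]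

theorem latF_surj (p : ℕ) (hp : p.Prime) (u v : ℕ) : Function.Surjective (latF p u v) := by
  intro H
  let φ : ℤ × ℤ →+ ZMod (p ^ u) × ZMod (p ^ v) :=
    AddMonoidHom.prodMap (Int.castAddHom _) (Int.castAddHom _)
  let K := H.comap φ
  have hK : ∀ x y : ℤ, (x, y) ∈ K ↔ ((x : ZMod (p ^ u)), (y : ZMod (p ^ v))) ∈ H :=
    fun x y => Iff.rfl
  have hKm : (((p ^ u : ℕ) : ℤ), (0 : ℤ)) ∈ K := by
    rw [hK, Int.cast_natCast, ZMod.natCast_self, Int.cast_zero]; exact H.zero_mem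
  have hKn : ((0 : ℤ), ((p ^ v : ℕ) : ℤ)) ∈ K := by
    rw [hK, Int.cast_natCast, ZMod.natCast_self, Int.cast_zero]; exact H.zero_mem
  obtain ⟨a, ha⟩ := int_subgroup_nat (K.map (AddMonoidHom.fst ℤ ℤ))
  obtain ⟨b, hb⟩ := int_subgroup_nat (K.comap (AddMonoidHom.inr ℤ ℤ))
  have ha' : ∀ x : ℤ, (∃ y : ℤ, (x, y) ∈ K) ↔ (a : ℤ) ∣ x := by
    intro x
    rw [← ha]
    simp
  have hb' : ∀ y : ℤ, ((0 : ℤ), y) ∈ K ↔ (b : ℤ) ∣ y := by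
    intro y
    rw [← hb]
    simp
  have ham : a ∣ p ^ u := by exact_mod_cast (ha' _).1 ⟨0, hKm⟩
  have hbn : b ∣ p ^ v := by exact_mod_cast (hb' _).1 hKn
  obtain ⟨i0, hi0, rfl⟩ := (Nat.dvd_prime_pow hp).1 ham
  obtain ⟨j, hj, rfl⟩ := (Nat.dvd_prime_pow hp).1 hbn
  obtain ⟨i, hi, rfl⟩ : ∃ i, i ≤ u ∧ i0 = u - i := ⟨u - i0, by omega, by omega⟩
  obtain ⟨t0, ht0⟩ := (ha' _).2 (dvd_refl _)
  have hbpos : (0 : ℤ) < ((p ^ j : ℕ) : ℤ) := by exact_mod_cast pow_pos hp.pos j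
  obtain ⟨t, htlt, htK⟩ : ∃ t : ℕ, t < p ^ j ∧
      (((p ^ (u - i) : ℕ) : ℤ), (t : ℤ)) ∈ K := by
    have h0 := Int.emod_nonneg t0 hbpos.ne'
    have h1 := Int.emod_lt_of_pos t0 hbpos
    refine ⟨(t0 % ((p ^ j : ℕ) : ℤ)).toNat, by omega, ?_⟩
    rw [Int.toNat_of_nonneg h0]
    have h2 : ((0 : ℤ), ((p ^ j : ℕ) : ℤ) * (t0 / ((p ^ j : ℕ) : ℤ))) ∈ K :=
      (hb' _).2 (Dvd.intro _ rfl)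
    have h3 := sub_mem ht0 h2
    rw [Prod.mk_sub_mk, sub_zero] at h3
    rwa [Int.emod_def]
  have hmul : ∀ (k x y : ℤ), (x, y) ∈ K → (k * x, k * y) ∈ K := by
    intro k x y h
    simpa using K.zsmul_mem h k
  have hct : p ^ j ∣ p ^ i * t := by
    have h1 := hmul ((p ^ i : ℕ) : ℤ) _ _ htK
    have h2 := sub_mem h1 hKm
    have e : ((p ^ i : ℕ) : ℤ) * ((p ^ (u - i) : ℕ) : ℤ) = ((p ^ u : ℕ) : ℤ) := by
      rw [← Nat.cast_mul, ← pow_add]; congr 2; omega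
    rw [Prod.mk_sub_mk, e, sub_self, sub_zero, hb'] at h2
    exact_mod_cast h2
  obtain ⟨s, rfl⟩ : p ^ (j - i) ∣ t := by
    rcases le_total j i with hji | hij
    · simp [Nat.sub_eq_zero_of_le hji]
    · have : p ^ j = p ^ i * p ^ (j - i) := by rw [← pow_add]; congr 1; omega
      rw [this] at hct
      exact Nat.dvd_of_mul_dvd_mul_left (pow_pos hp.pos i) hct
  have hs : s < p ^ min i j := by
    have : p ^ j = p ^ (j - i) * p ^ min i j := by rw [← pow_add]; congr 1; omega
    rw [this] at htlt
    exact Nat.lt_of_mul_lt_mul_left htlt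
  refine ⟨⟨⟨i, by omega⟩, ⟨j, by omega⟩, ⟨s, hs⟩⟩, ?_⟩
  simp only [latF]
  ext ⟨x, y⟩
  obtain ⟨x, rfl⟩ := ZMod.intCast_surjective x
  obtain ⟨y, rfl⟩ := ZMod.intCast_surjective y
  rw [mem_latS, ← hK]
  constructor
  · rintro ⟨k, l, ⟨r, hr⟩, ⟨w, hw⟩⟩
    have h1 := hmul k _ _ htK
    have h2 := hmul l _ _ ((hb' _).2 (dvd_refl _))
    have h3 := hmul r _ _ hKm
    have h4 := hmul w _ _ hKn
    have h5 := add_mem (add_mem h1 h2) (add_mem h3 h4)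
    simp only [Prod.mk_add_mk] at h5
    convert h5 using 2
    · linarith
    · linarith
  · intro h
    obtain ⟨k, hk⟩ := (ha' x).1 ⟨y, h⟩
    have h1 := sub_mem h (hmul k _ _ htK)
    have e : x - k * ((p ^ (u - i) : ℕ) : ℤ) = 0 := by rw [hk]; ring
    rw [Prod.mk_sub_mk, e, hb'] at h1
    obtain ⟨l, hl⟩ := h1
    refine ⟨k, l, by rw [e]; exact dvd_zero _, ?_⟩
    have : y - (k * ((p ^ (j - i) * s : ℕ) : ℤ) + l * ((p ^ j : ℕ) : ℤ)) = 0 := by linarith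
    rw [this]; exact dvd_zero _

theorem stmt10 (p : ℕ) (hp : p.Prime) (u v : ℕ) :
    (numSubgroups (p ^ u) (p ^ v) =
        ∑ u₁ ∈ Finset.range (u + 1), ∑ u₂ ∈ Finset.range (v + 1), p ^ min u₁ u₂) ∧
    (numSubgroups (p ^ u) (p ^ v) =
        ∑ j ∈ Finset.range (min u v + 1), (u + v + 1 - 2 * j) * p ^ j) := by
  rw [← sum_min_eq, and_self, numSubgroups,
    ← Nat.card_congr (Equiv.ofBijective _ ⟨latF_inj p hp u v, latF_surj p hp u v⟩),
    Nat.card_eq_fintype_card, Fintype.card_sigma]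
  simp only [Fintype.card_sigma, Fintype.card_fin]
  rw [Finset.sum_range]
  refine Finset.sum_congr rfl fun i _ => ?_
  rw [Finset.sum_range]
end

section
/- There exists an absolute constant C such that for every prime p and every integer α ≥ 1, one has | ∑_{u+v = 2α, u,v ≥ 0} s(p^u, p^v) − p^α | ≤ C p^{α−1}; equivalently, the sum of s(m₁,m₂) over all factorizations p^{2α} = m₁m₂ equals p^α + O(p^{α−1}) uniformly in p and α. -/
/-- The Goursat count for `ℤ_{p^a} × ℤ_{p^b}`. -/
def goursatF (p a b : ℕ) : ℕ :=
  ∑ i ∈ Finset.range (a + 1), ∑ k ∈ Finset.range (b + 1), p ^ min i k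

theorem goursat_structure (p : ℕ) (hp : p.Prime) (a b : ℕ)
    (H : AddSubgroup (ZMod (p ^ a) × ZMod (p ^ b))) :
    ∃ i k t : ℕ, i ≤ a ∧ k ≤ b ∧ t < p ^ min i k ∧
      ∀ x y : ℤ, ((x : ZMod (p ^ a)), (y : ZMod (p ^ b))) ∈ H ↔
        ∃ w z : ℤ, x = w * p ^ (a - i) ∧ y = w * (p ^ (k - min i k) * t) + z * p ^ k := by
  let φ : ℤ × ℤ →+ ZMod (p ^ a) × ZMod (p ^ b) :=
    (Int.castAddHom (ZMod (p ^ a))).prodMap (Int.castAddHom (ZMod (p ^ b)))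
  let L : AddSubgroup (ℤ × ℤ) := H.comap φ
  have hL : ∀ x y : ℤ, (x, y) ∈ L ↔ ((x : ZMod (p ^ a)), (y : ZMod (p ^ b))) ∈ H :=
    fun x y => Iff.rfl
  have h1 : (((p ^ a : ℕ) : ℤ), (0 : ℤ)) ∈ L := by
    rw [hL, Int.cast_natCast, ZMod.natCast_self, Int.cast_zero]; exact H.zero_mem
  have h2 : ((0 : ℤ), ((p ^ b : ℕ) : ℤ)) ∈ L := by
    rw [hL, Int.cast_natCast, ZMod.natCast_self, Int.cast_zero]; exact H.zero_mem
  obtain ⟨d, hd⟩ := Int.subgroup_cyclic (L.map (AddMonoidHom.fst ℤ ℤ))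
  obtain ⟨e, he⟩ := Int.subgroup_cyclic (L.comap (AddMonoidHom.inr ℤ ℤ))
  have hd' : ∀ x : ℤ, (∃ y, (x, y) ∈ L) ↔ d ∣ x := by
    intro x
    rw [← Int.mem_zmultiples_iff, AddSubgroup.zmultiples_eq_closure, ← hd]
    simp
  have he' : ∀ y : ℤ, (0, y) ∈ L ↔ e ∣ y := by
    intro x
    rw [← Int.mem_zmultiples_iff, AddSubgroup.zmultiples_eq_closure, ← he]
    simp
  have key : ∀ (d : ℤ) (n : ℕ), d ∣ ((p ^ n : ℕ) : ℤ) →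
      ∃ i ≤ n, ∀ x : ℤ, d ∣ x ↔ (p : ℤ) ^ i ∣ x := by
    intro d n h
    rw [Int.dvd_natCast, Nat.dvd_prime_pow hp] at h
    obtain ⟨i, hi, h⟩ := h
    refine ⟨i, hi, fun x => ?_⟩
    rw [← Int.natAbs_dvd, h]; push_cast; rfl
  obtain ⟨i', hi', hdi⟩ := key d a ((hd' _).1 ⟨_, h1⟩)
  obtain ⟨k, hk, hek⟩ := key e b ((he' _).1 h2)
  simp only [hdi] at hd'
  simp only [hek] at he'
  obtain ⟨i, hi, rfl⟩ : ∃ i ≤ a, i' = a - i := ⟨a - i', by omega, by omega⟩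
  obtain ⟨c, hc⟩ := (hd' _).2 (dvd_refl _)
  have hpp : (p : ℤ) ≠ 0 := by exact_mod_cast hp.ne_zero
  have hcd : (p : ℤ) ^ (k - min i k) ∣ c := by
    have h3 := L.sub_mem (L.zsmul_mem hc ((p : ℤ) ^ i)) h1
    have h4 : ((p:ℤ)^i • ((p:ℤ) ^ (a - i), c) - (((p ^ a : ℕ) : ℤ), (0 : ℤ))) = (0, (p:ℤ)^i * c) := by
      ext
      · simp [← pow_add, Nat.add_sub_cancel' hi]
      · simp
    rw [h4, he'] at h3
    rcases le_total i k with h | h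
    · rw [min_eq_left h]
      rw [← Nat.add_sub_cancel' h, pow_add] at h3
      simpa using (mul_dvd_mul_iff_left (pow_ne_zero i hpp)).1 h3
    · simp [min_eq_right h]
  obtain ⟨t', rfl⟩ := hcd
  have hM : (0 : ℤ) < (p : ℤ) ^ min i k := by
    have := hp.pos
    positivity
  have htm : ((t' % (p : ℤ) ^ min i k).toNat : ℤ) = t' % (p : ℤ) ^ min i k :=
    Int.toNat_of_nonneg (Int.emod_nonneg _ hM.ne')
  refine ⟨i, k, (t' % (p : ℤ) ^ min i k).toNat, hi, hk, ?_, ?_⟩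
  · have := Int.emod_lt_of_pos t' hM
    rw [← htm] at this
    exact_mod_cast this
  · intro x y
    rw [htm, ← hL]
    have hdm := Int.emod_add_mul_ediv t' ((p : ℤ) ^ min i k)
    set r := t' % (p : ℤ) ^ min i k
    set q := t' / (p : ℤ) ^ min i k
    have hpk : (p : ℤ) ^ (k - min i k) * (p : ℤ) ^ min i k = (p : ℤ) ^ k := by
      rw [← pow_add, Nat.sub_add_cancel (min_le_right _ _)]
    constructor
    · intro h
      obtain ⟨w, hw⟩ := (hd' x).1 ⟨y, h⟩
      have h3 := L.sub_mem h (L.zsmul_mem hc w)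
      have h4 : ((x, y) - w • ((p:ℤ) ^ (a - i), (p : ℤ) ^ (k - min i k) * t')) =
          (0, y - w * ((p : ℤ) ^ (k - min i k) * t')) := by
        ext
        · simp [hw, mul_comm]
        · simp
      rw [h4, he'] at h3
      obtain ⟨z, hz⟩ := h3
      refine ⟨w, z + w * q, by rw [hw, mul_comm], ?_⟩
      rw [← hdm] at hz
      linear_combination hz + w * q * hpk
    · rintro ⟨w, z, rfl, rfl⟩
      have h3 : ((0 : ℤ), (z - w * q) * (p : ℤ) ^ k) ∈ L := (he' _).2 (Dvd.intro_left _ rfl)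
      have h4 := L.add_mem (L.zsmul_mem hc w) h3
      convert h4 using 1
      ext
      · simp
      · simp only [Prod.snd_add, Prod.smul_snd, smul_eq_mul]
        rw [← hdm]
        linear_combination (-w * q) * hpk

theorem numSubgroups_le (p : ℕ) (hp : p.Prime) (a b : ℕ) :
    numSubgroups (p ^ a) (p ^ b) ≤ goursatF p a b := by
  classical
  choose I K T hI hK hT h using goursat_structure p hp a b
  let S : Finset (Σ _ : ℕ × ℕ, ℕ) :=
    (Finset.range (a + 1) ×ˢ Finset.range (b + 1)).sigma
      (fun ik => Finset.range (p ^ min ik.1 ik.2))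
  have hS : S.card = goursatF p a b := by
    simp [S, Finset.card_sigma, goursatF, Finset.sum_product]
  let f : AddSubgroup (ZMod (p ^ a) × ZMod (p ^ b)) → S := fun H =>
    ⟨⟨(I H, K H), T H⟩, by
      simp only [S, Finset.mem_sigma, Finset.mem_product, Finset.mem_range]
      exact ⟨⟨Nat.lt_succ_of_le (hI H), Nat.lt_succ_of_le (hK H)⟩, hT H⟩⟩
  have hf : Function.Injective f := by
    intro H H' e
    simp only [f, Subtype.mk.injEq, Sigma.mk.injEq, Prod.mk.injEq, heq_eq_eq] at e
    obtain ⟨⟨e1, e2⟩, e3⟩ := e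
    ext ⟨x, y⟩
    obtain ⟨x, rfl⟩ := ZMod.intCast_surjective x
    obtain ⟨y, rfl⟩ := ZMod.intCast_surjective y
    rw [h H, h H', e1, e2, e3]
  have := Nat.card_le_card_of_injective f hf
  rw [numSubgroups, ← hS]
  simpa using this

theorem le_numSubgroups (n : ℕ) (hn : n ≠ 0) : n ≤ numSubgroups n n := by
  have : NeZero n := ⟨hn⟩
  let f : ZMod n → AddSubgroup (ZMod n × ZMod n) := fun c => (AddMonoidHom.mulLeft c).graph
  have hf : Function.Injective f := by
    intro c c' e
    have h1 : ((1 : ZMod n), c) ∈ f c := by simp [f, AddMonoidHom.mem_graph]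
    rw [e] at h1
    simpa [f, AddMonoidHom.mem_graph, eq_comm] using h1
  have := Nat.card_le_card_of_injective f hf
  simpa [numSubgroups] using this

theorem goursatF_zero_left (p b : ℕ) : goursatF p 0 b = b + 1 := by
  simp [goursatF]

theorem goursatF_zero_right (p a : ℕ) : goursatF p a 0 = a + 1 := by
  simp [goursatF]

theorem goursatF_succ (p a b : ℕ) :
    goursatF p (a + 1) (b + 1) = (a + b + 3) + p * goursatF p a b := by
  unfold goursatF
  rw [Finset.sum_range_succ']
  have : ∀ i, ∑ k ∈ Finset.range (b + 1 + 1), p ^ min (i + 1) k =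
      p * (∑ k ∈ Finset.range (b + 1), p ^ min i k) + 1 := by
    intro i
    rw [Finset.sum_range_succ', Finset.mul_sum]
    simp [← Nat.succ_eq_add_one, Nat.succ_min_succ, pow_succ, mul_comm]
  simp only [this, Finset.sum_add_distrib, ← Finset.mul_sum]
  simp
  ring

def goursatT (p α : ℕ) : ℕ := ∑ u ∈ Finset.range (2 * α + 1), goursatF p u (2 * α - u)

theorem goursatT_succ (p α : ℕ) :
    goursatT p (α + 1) = (2 * α + 3) ^ 2 + p * goursatT p α := by
  unfold goursatT
  rw [show 2 * (α + 1) + 1 = (2 * α + 1) + 1 + 1 by ring, Finset.sum_range_succ,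
    Finset.sum_range_succ']
  have : ∀ u ∈ Finset.range (2 * α + 1), goursatF p (u + 1) (2 * (α + 1) - (u + 1)) =
      (2 * α + 3) + p * goursatF p u (2 * α - u) := by
    intro u hu
    rw [Finset.mem_range] at hu
    rw [show 2 * (α + 1) - (u + 1) = (2 * α - u) + 1 by omega, goursatF_succ]
    congr 1
    omega
  rw [Finset.sum_congr rfl this, Finset.sum_add_distrib, ← Finset.mul_sum,
    show 2 * (α + 1) - (2 * α + 1 + 1) = 0 by omega, goursatF_zero_left, goursatF_zero_right]
  simp
  ring

theorem goursatT_le (p : ℕ) (hp : 2 ≤ p) (n : ℕ) :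
    goursatT p (n + 1) + (4 * (n + 1) ^ 2 + 20 * (n + 1) + 33) ≤ p ^ (n + 1) + 66 * p ^ n := by
  induction n with
  | zero =>
    rw [goursatT_succ]
    simp [goursatT, goursatF]
    omega
  | succ n ih =>
    rw [goursatT_succ]
    have h := Nat.mul_le_mul_left p ih
    have h2 := Nat.mul_le_mul_right (4 * (n + 1) ^ 2 + 20 * (n + 1) + 33) hp
    rw [pow_succ p (n + 1), pow_succ p n] at *
    nlinarith

theorem stmt11 : ∃ C : ℝ, ∀ p : ℕ, p.Prime → ∀ α : ℕ, 1 ≤ α →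
    |(∑ u ∈ Finset.range (2 * α + 1),
        (numSubgroups (p ^ u) (p ^ (2 * α - u)) : ℝ)) - (p : ℝ) ^ α|
      ≤ C * (p : ℝ) ^ (α - 1) := by
  refine ⟨66, fun p hp α hα => ?_⟩
  obtain ⟨n, rfl⟩ : ∃ n, α = n + 1 := ⟨α - 1, by omega⟩
  have hup : ∑ u ∈ Finset.range (2 * (n + 1) + 1),
      numSubgroups (p ^ u) (p ^ (2 * (n + 1) - u)) ≤ p ^ (n + 1) + 66 * p ^ n := by
    have h1 : ∑ u ∈ Finset.range (2 * (n + 1) + 1),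
        numSubgroups (p ^ u) (p ^ (2 * (n + 1) - u)) ≤ goursatT p (n + 1) :=
      Finset.sum_le_sum fun u _ => numSubgroups_le p hp _ _
    have h2 := goursatT_le p hp.two_le n
    omega
  have hlow : p ^ (n + 1) ≤ ∑ u ∈ Finset.range (2 * (n + 1) + 1),
      numSubgroups (p ^ u) (p ^ (2 * (n + 1) - u)) := by
    have h1 := Finset.single_le_sum
      (f := fun u => numSubgroups (p ^ u) (p ^ (2 * (n + 1) - u)))
      (s := Finset.range (2 * (n + 1) + 1)) (fun _ _ => Nat.zero_le _)
      (Finset.mem_range.2 (show n + 1 < 2 * (n + 1) + 1 by omega))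
    refine le_trans ?_ h1
    simp only [show 2 * (n + 1) - (n + 1) = n + 1 by omega]
    exact le_numSubgroups _ (pow_ne_zero _ hp.ne_zero)
  have hup' : ∑ u ∈ Finset.range (2 * (n + 1) + 1),
      (numSubgroups (p ^ u) (p ^ (2 * (n + 1) - u)) : ℝ) ≤ (p : ℝ) ^ (n + 1) + 66 * (p : ℝ) ^ n := by
    exact_mod_cast hup
  have hlow' : (p : ℝ) ^ (n + 1) ≤ ∑ u ∈ Finset.range (2 * (n + 1) + 1),
      (numSubgroups (p ^ u) (p ^ (2 * (n + 1) - u)) : ℝ) := by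
    exact_mod_cast hlow
  rw [Nat.add_sub_cancel, abs_of_nonneg (by linarith)]
  linarith
end

section
/- There exists an absolute constant C such that for every prime p and every odd integer α ≥ 1, one has | ∑_{u+v = 3α, u,v ≥ 0} s(p^u, p^v) − 4p^{(3α−1)/2} | ≤ C p^{(3α−3)/2}; that is, the sum of s(m₁,m₂) over all factorizations p^{3α} = m₁m₂ equals 4p^{(3α−1)/2} + O(p^{(3α−1)/2 − 1}) uniformly in p and odd α. -/
open Finset in
/-- The double sum counting subgroups of `ℤ_{p^a} × ℤ_{p^b}`. -/
def sgSum (p a b : ℕ) : ℕ :=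
  ∑ i ∈ range (a + 1), ∑ j ∈ range (b + 1), p ^ min i j

/-- The subgroup of `G × K` attached to Goursat type data. -/
def sgMk {G K : Type*} [AddCommGroup G] [AddCommGroup K]
    (x : Σ A : AddSubgroup G, Σ B : AddSubgroup K, (A →+ K ⧸ B)) : AddSubgroup (G × K) where
  carrier := {z | ∃ h : z.1 ∈ x.1, x.2.2 ⟨z.1, h⟩ = (z.2 : K ⧸ x.2.1)}
  add_mem' := by
    rintro ⟨a, b⟩ ⟨c, d⟩ ⟨h1, h2⟩ ⟨h3, h4⟩
    refine ⟨x.1.add_mem h1 h3, ?_⟩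
    have := map_add x.2.2 ⟨a, h1⟩ ⟨c, h3⟩
    rw [h2, h4] at this
    exact this
  zero_mem' := ⟨x.1.zero_mem, map_zero x.2.2⟩
  neg_mem' := by
    rintro ⟨a, b⟩ ⟨h1, h2⟩
    refine ⟨x.1.neg_mem h1, ?_⟩
    have := map_neg x.2.2 ⟨a, h1⟩
    rw [h2] at this
    exact this

theorem mem_sgMk {G K : Type*} [AddCommGroup G] [AddCommGroup K]
    (A : AddSubgroup G) (B : AddSubgroup K) (f : A →+ K ⧸ B) (g : G) (k : K) :
    (g, k) ∈ sgMk ⟨A, B, f⟩ ↔ ∃ h : g ∈ A, f ⟨g, h⟩ = (k : K ⧸ B) := Iff.rfl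

theorem sgMk_bijective {G K : Type*} [AddCommGroup G] [AddCommGroup K] :
    Function.Bijective (sgMk (G := G) (K := K)) := by
  constructor
  · rintro ⟨A, B, f⟩ ⟨A', B', f'⟩ h
    have key : ∀ (g : G) (k : K), (∃ h : g ∈ A, f ⟨g, h⟩ = (k : K ⧸ B)) ↔
        (∃ h : g ∈ A', f' ⟨g, h⟩ = (k : K ⧸ B')) := by
      intro g k
      rw [← mem_sgMk, ← mem_sgMk, h]
    have hA : A = A' := by
      ext g
      constructor
      · intro hg
        obtain ⟨k, hk⟩ := QuotientAddGroup.mk_surjective (f ⟨g, hg⟩)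
        exact ((key g k).1 ⟨hg, hk.symm⟩).1
      · intro hg
        obtain ⟨k, hk⟩ := QuotientAddGroup.mk_surjective (f' ⟨g, hg⟩)
        exact ((key g k).2 ⟨hg, hk.symm⟩).1
    subst hA
    have aux : ∀ (B : AddSubgroup K) (f : A →+ K ⧸ B) (k : K),
        (∃ h : (0 : G) ∈ A, f ⟨0, h⟩ = (k : K ⧸ B)) ↔ k ∈ B := by
      intro B f k
      have h0 : f ⟨0, A.zero_mem⟩ = 0 := map_zero f
      constructor
      · rintro ⟨h, e⟩
        rw [h0] at e
        exact (QuotientAddGroup.eq_zero_iff k).1 e.symm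
      · intro hk
        exact ⟨A.zero_mem, h0.trans ((QuotientAddGroup.eq_zero_iff k).2 hk).symm⟩
    have hB : B = B' := by
      ext k
      rw [← aux B f k, ← aux B' f' k]
      exact key 0 k
    subst hB
    have hf : f = f' := by
      ext ⟨g, hg⟩
      obtain ⟨k, hk⟩ := QuotientAddGroup.mk_surjective (f ⟨g, hg⟩)
      obtain ⟨_, e⟩ := (key g k).1 ⟨hg, hk.symm⟩
      rw [e, ← hk]
    rw [hf]
  · intro H
    have ex : ∀ a : H.map (AddMonoidHom.fst G K), ∃ k : K, ((a : G), k) ∈ H := by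
      rintro ⟨a, ha⟩
      obtain ⟨⟨x, y⟩, h1, h2⟩ := ha
      exact ⟨y, by simpa [← h2] using h1⟩
    choose φ hφ using ex
    have uniq : ∀ (g : G) (k k' : K), (g, k) ∈ H → (g, k') ∈ H →
        (k : K ⧸ H.comap (AddMonoidHom.inr G K)) = (k' : K ⧸ H.comap (AddMonoidHom.inr G K)) := by
      intro g k k' h h'
      rw [QuotientAddGroup.eq, AddSubgroup.mem_comap]
      have := H.add_mem (H.neg_mem h) h'
      simpa using this
    refine ⟨⟨H.map (AddMonoidHom.fst G K), H.comap (AddMonoidHom.inr G K),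
      AddMonoidHom.mk' (fun a => (φ a : K ⧸ H.comap (AddMonoidHom.inr G K))) ?_⟩, ?_⟩
    · intro a b
      exact uniq _ _ (φ a + φ b) (hφ (a + b)) (H.add_mem (hφ a) (hφ b))
    · ext ⟨g, k⟩
      rw [mem_sgMk]
      constructor
      · rintro ⟨h, e⟩
        have e' : (φ ⟨g, h⟩ : K ⧸ H.comap (AddMonoidHom.inr G K)) = k := e
        rw [QuotientAddGroup.eq, AddSubgroup.mem_comap] at e'
        have := H.add_mem (hφ ⟨g, h⟩) e'
        simpa using this
      · intro h
        have hg : g ∈ H.map (AddMonoidHom.fst G K) := ⟨(g, k), h, rfl⟩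
        exact ⟨hg, uniq g _ _ (hφ ⟨g, hg⟩) h⟩

theorem card_ker_nsmul {K : Type*} [AddCommGroup K] [IsAddCyclic K] [Finite K] (d : ℕ) :
    Nat.card (nsmulAddMonoidHom d : K →+ K).ker = (Nat.card K).gcd d :=
  IsAddCyclic.card_nsmulAddMonoidHom_ker K d

theorem card_zmod_hom {K : Type*} [AddCommGroup K] [IsAddCyclic K] [Finite K] (d : ℕ) :
    Nat.card (ZMod d →+ K) = (Nat.card K).gcd d := by
  rw [← card_ker_nsmul d, ← Nat.card_congr (ZMod.lift d (A := K))]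
  refine Nat.card_congr ((zmultiplesHom K).symm.subtypeEquiv ?_)
  intro f
  rw [AddMonoidHom.mem_ker]
  have : f (d : ℤ) = d • f 1 := by
    rw [← map_nsmul]; simp
  rw [this]
  rfl

theorem card_hom {A K : Type*} [AddCommGroup A] [IsAddCyclic A] [AddCommGroup K] [IsAddCyclic K]
    [Finite K] : Nat.card (A →+ K) = (Nat.card K).gcd (Nat.card A) := by
  rw [← card_zmod_hom (K := K)]
  exact Nat.card_congr ((zmodAddCyclicAddEquiv (G := A) inferInstance).symm.addMonoidHomCongrLeftEquiv)

open Finset in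
theorem sum_subgroups {p : ℕ} (hp : p.Prime) (a : ℕ) [Fintype (AddSubgroup (ZMod (p ^ a)))]
    (f : ℕ → ℕ) :
    ∑ A : AddSubgroup (ZMod (p ^ a)), f (Nat.card A) = ∑ i ∈ range (a + 1), f (p ^ i) := by
  have : NeZero (p ^ a) := ⟨pow_ne_zero _ hp.ne_zero⟩
  have hc : ∀ i ∈ range (a + 1),
      Nat.card (nsmulAddMonoidHom (p ^ i) : ZMod (p ^ a) →+ ZMod (p ^ a)).ker = p ^ i := by
    intro i hi
    rw [card_ker_nsmul, Nat.card_zmod]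
    exact Nat.gcd_eq_right (pow_dvd_pow _ (by simpa [Nat.lt_succ_iff] using hi))
  symm
  refine Finset.sum_bij
    (fun i _ => (nsmulAddMonoidHom (p ^ i) : ZMod (p ^ a) →+ ZMod (p ^ a)).ker) ?_ ?_ ?_ ?_
  · intros; exact mem_univ _
  · intro i hi j hj h
    have h' := hc i hi
    beta_reduce at h
    rw [h, hc j hj] at h'
    exact (Nat.pow_right_injective hp.two_le h').symm
  · intro A _
    have hd : Nat.card A ∣ p ^ a := by
      have := AddSubgroup.card_addSubgroup_dvd_card A
      rwa [Nat.card_zmod] at this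
    obtain ⟨i, hi, h⟩ := (Nat.dvd_prime_pow hp).1 hd
    have hi' : i ∈ range (a + 1) := by simpa [Nat.lt_succ_iff] using hi
    refine ⟨i, hi', ?_⟩
    symm
    apply AddSubgroup.eq_of_le_of_card_ge
    · intro x hx
      rw [AddMonoidHom.mem_ker]
      have : Nat.card A • (⟨x, hx⟩ : A) = 0 := card_nsmul_eq_zero'
      rw [h] at this
      exact congrArg Subtype.val this
    · rw [hc i hi', h]
  · intro i hi
    rw [hc i hi]

open Finset in
theorem numSubgroups_eq_s12 {p : ℕ} (hp : p.Prime) (a b : ℕ) :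
    numSubgroups (p ^ a) (p ^ b) = sgSum p a b := by
  classical
  have : NeZero (p ^ a) := ⟨pow_ne_zero _ hp.ne_zero⟩
  have : NeZero (p ^ b) := ⟨pow_ne_zero _ hp.ne_zero⟩
  have : Fintype (AddSubgroup (ZMod (p ^ a))) := Fintype.ofFinite _
  have : Fintype (AddSubgroup (ZMod (p ^ b))) := Fintype.ofFinite _
  have hfin : ∀ (A : AddSubgroup (ZMod (p ^ a))) (B : AddSubgroup (ZMod (p ^ b))),
      Finite (A →+ ZMod (p ^ b) ⧸ B) := fun A B => DFunLike.finite _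
  have hq : ∀ B : AddSubgroup (ZMod (p ^ b)),
      Nat.card (ZMod (p ^ b) ⧸ B) = p ^ b / Nat.card B := by
    intro B
    have h := AddSubgroup.card_eq_card_quotient_mul_card_addSubgroup B
    rw [Nat.card_zmod] at h
    exact (Nat.div_eq_of_eq_mul_left Nat.card_pos h).symm
  unfold numSubgroups
  rw [← Nat.card_congr (Equiv.ofBijective _ (sgMk_bijective (G := ZMod (p ^ a)) (K := ZMod (p ^ b))))]
  rw [Nat.card_sigma]
  simp_rw [Nat.card_sigma]
  have hh : ∀ (A : AddSubgroup (ZMod (p ^ a))) (B : AddSubgroup (ZMod (p ^ b))),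
      Nat.card (A →+ ZMod (p ^ b) ⧸ B) = (p ^ b / Nat.card B).gcd (Nat.card A) := by
    intro A B
    have : IsAddCyclic (ZMod (p ^ b) ⧸ B) :=
      isAddCyclic_of_surjective (QuotientAddGroup.mk' B) (QuotientAddGroup.mk'_surjective B)
    rw [card_hom, hq]
  simp_rw [hh]
  rw [sum_subgroups hp a (fun n => ∑ B : AddSubgroup (ZMod (p ^ b)), (p ^ b / Nat.card B).gcd n)]
  unfold sgSum
  refine Finset.sum_congr rfl fun i _ => ?_
  rw [sum_subgroups hp b (fun n => (p ^ b / n).gcd (p ^ i)), ← Finset.sum_range_reflect]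
  refine Finset.sum_congr rfl fun j hj => ?_
  have hj' : j ≤ b := by simpa [Nat.lt_succ_iff] using hj
  have e : b + 1 - 1 - j = b - j := by omega
  rw [e, Nat.pow_div (by omega) hp.pos]
  have e2 : b - (b - j) = j := by omega
  rw [e2]
  rcases le_total i j with h | h
  · rw [min_eq_left h]; exact Nat.gcd_eq_right (pow_dvd_pow _ h)
  · rw [min_eq_right h]; exact Nat.gcd_eq_left (pow_dvd_pow _ h)

theorem sgSum_zero_left (p b : ℕ) : sgSum p 0 b = b + 1 := by simp [sgSum]

theorem sgSum_zero_right (p a : ℕ) : sgSum p a 0 = a + 1 := by simp [sgSum]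

theorem sgSum_succ (p a b : ℕ) : sgSum p (a + 1) (b + 1) = p * sgSum p a b + (a + b + 3) := by
  unfold sgSum
  rw [Finset.sum_range_succ']
  have : ∀ i, ∑ j ∈ Finset.range (b + 1 + 1), p ^ min (i + 1) j
      = p * (∑ j ∈ Finset.range (b + 1), p ^ min i j) + 1 := by
    intro i
    rw [Finset.sum_range_succ', Finset.mul_sum]
    simp [Nat.add_min_add_right, pow_succ, mul_comm]
  simp only [this, Finset.sum_add_distrib, ← Finset.mul_sum]
  simp
  ring

/-- The sum over all factorizations of `p ^ n`. -/
def sgTot (p n : ℕ) : ℕ := ∑ u ∈ Finset.range (n + 1), sgSum p u (n - u)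

theorem sgTot_succ (p n : ℕ) : sgTot p (n + 2) = p * sgTot p n + (n + 3) ^ 2 := by
  unfold sgTot
  rw [Finset.sum_range_succ', Finset.sum_range_succ]
  have : ∑ u ∈ Finset.range (n + 1), sgSum p (u + 1) (n + 2 - (u + 1))
      = ∑ u ∈ Finset.range (n + 1), (p * sgSum p u (n - u) + (n + 3)) := by
    refine Finset.sum_congr rfl fun u hu => ?_
    have hu' : u ≤ n := by simpa [Nat.lt_succ_iff] using hu
    have e : n + 2 - (u + 1) = (n - u) + 1 := by omega
    rw [e, sgSum_succ]
    omega
  rw [this, Finset.sum_add_distrib, ← Finset.mul_sum]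
  have e : n + 2 - (n + 1 + 1) = 0 := by omega
  rw [e, sgSum_zero_left, sgSum_zero_right]
  simp
  ring

theorem sgTot_one (p : ℕ) : sgTot p 1 = 4 := by
  simp [sgTot, Finset.sum_range_succ, sgSum_zero_left, sgSum_zero_right]

theorem sgTot_lower (p k : ℕ) : 4 * p ^ k ≤ sgTot p (2 * k + 1) := by
  induction k with
  | zero => simp [sgTot_one]
  | succ k ih =>
    have e : 2 * (k + 1) + 1 = (2 * k + 1) + 2 := by ring
    rw [e, sgTot_succ, pow_succ]
    nlinarith [Nat.mul_le_mul_left p ih]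

theorem sgTot_upper (p k : ℕ) (hp : 2 ≤ p) :
    sgTot p (2 * k + 3) + (4 * k ^ 2 + 32 * k + 72) ≤ 4 * p ^ (k + 1) + 88 * p ^ k := by
  induction k with
  | zero =>
    have := sgTot_succ p 1
    rw [sgTot_one] at this
    simp at this ⊢
    omega
  | succ k ih =>
    have e : 2 * (k + 1) + 3 = (2 * k + 3) + 2 := by ring
    rw [e, sgTot_succ]
    have h1 := Nat.mul_le_mul_left p ih
    have h2 := Nat.mul_le_mul_right (4 * k ^ 2 + 32 * k + 72) hp
    have e1 : p ^ (k + 1 + 1) = p * p ^ (k + 1) := by ring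
    have e2 : 88 * p ^ (k + 1) = p * (88 * p ^ k) := by ring
    rw [e1, e2]
    nlinarith [h1, h2]

theorem stmt12 : ∃ C : ℝ, ∀ p : ℕ, p.Prime → ∀ α : ℕ, 1 ≤ α → Odd α →
    |(∑ u ∈ Finset.range (3 * α + 1),
        (numSubgroups (p ^ u) (p ^ (3 * α - u)) : ℝ)) - 4 * (p : ℝ) ^ ((3 * α - 1) / 2)|
      ≤ C * (p : ℝ) ^ ((3 * α - 3) / 2) := by
  refine ⟨88, ?_⟩
  intro p hp α _ hodd
  obtain ⟨m, rfl⟩ := hodd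
  have hs : (∑ u ∈ Finset.range (3 * (2 * m + 1) + 1),
      (numSubgroups (p ^ u) (p ^ (3 * (2 * m + 1) - u)) : ℝ))
      = (sgTot p (2 * (3 * m) + 3) : ℝ) := by
    have e : 3 * (2 * m + 1) = 2 * (3 * m) + 3 := by ring
    rw [e, sgTot]
    push_cast
    refine Finset.sum_congr rfl fun u _ => ?_
    rw [numSubgroups_eq_s12 hp]
  have e1 : (3 * (2 * m + 1) - 1) / 2 = 3 * m + 1 := by omega
  have e2 : (3 * (2 * m + 1) - 3) / 2 = 3 * m := by omega
  rw [hs, e1, e2]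
  have hl := sgTot_lower p (3 * m + 1)
  have e3 : 2 * (3 * m + 1) + 1 = 2 * (3 * m) + 3 := by ring
  rw [e3] at hl
  have hu : sgTot p (2 * (3 * m) + 3) ≤ 4 * p ^ (3 * m + 1) + 88 * p ^ (3 * m) :=
    le_trans (Nat.le_add_right _ _) (sgTot_upper p (3 * m) hp.two_le)
  have hl' : (4 * (p : ℝ) ^ (3 * m + 1)) ≤ (sgTot p (2 * (3 * m) + 3) : ℝ) := by exact_mod_cast hl
  have hu' : (sgTot p (2 * (3 * m) + 3) : ℝ)
      ≤ 4 * (p : ℝ) ^ (3 * m + 1) + 88 * (p : ℝ) ^ (3 * m) := by exact_mod_cast hu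
  rw [abs_of_nonneg (by linarith)]
  linarith
end

section
/- There exists an absolute constant C such that for every prime p and every even integer α ≥ 2, one has | ∑_{u+v = 3α, u,v ≥ 0} s(p^u, p^v) − p^{3α/2} | ≤ C p^{3α/2 − 1}; that is, the sum of s(m₁,m₂) over all factorizations p^{3α} = m₁m₂ equals p^{3α/2} + O(p^{3α/2 − 1}) uniformly in p and even α. -/
/-- Parametrised subgroup of `ℤ × ℤ`. -/
def latt (p u i j y : ℕ) : AddSubgroup (ℤ × ℤ) where
  carrier := {z | ∃ k : ℤ, z.1 = k * (p : ℤ) ^ (u - i) ∧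
    (p : ℤ) ^ j ∣ z.2 - k * ((p : ℤ) ^ (j - min i j) * y)}
  zero_mem' := ⟨0, by simp, by simp⟩
  add_mem' := by
    rintro a b ⟨k, h1, h2⟩ ⟨l, h3, h4⟩
    refine ⟨k + l, by simp [h1, h3]; ring, ?_⟩
    have := dvd_add h2 h4
    refine this.trans (dvd_of_eq ?_)
    rw [Prod.snd_add]; ring
  neg_mem' := by
    rintro a ⟨k, h1, h2⟩
    refine ⟨-k, by simp [h1], ?_⟩
    have := (dvd_neg.2 h2)
    refine this.trans (dvd_of_eq ?_)
    rw [Prod.snd_neg]; ring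

lemma sub_int (p : ℕ) (hp : p.Prime) (u : ℕ) (K : AddSubgroup ℤ) (h : (p : ℤ) ^ u ∈ K) :
    ∃ i ≤ u, ∀ z, z ∈ K ↔ (p : ℤ) ^ i ∣ z := by
  obtain ⟨a, ha⟩ := Int.subgroup_cyclic K
  rw [← AddSubgroup.zmultiples_eq_closure] at ha
  have hK : ∀ z, z ∈ K ↔ a ∣ z := by
    intro z; rw [ha, Int.mem_zmultiples_iff]
  have h1 := (hK _).1 h
  have h2 : a.natAbs ∣ p ^ u := by
    have := Int.natAbs_dvd_natAbs.2 h1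
    simpa [Int.natAbs_pow] using this
  obtain ⟨i, hi, h3⟩ := (Nat.dvd_prime_pow hp).1 h2
  refine ⟨i, hi, fun z => ?_⟩
  rw [hK, ← Int.natAbs_dvd, h3]; simp

lemma exists_latt (p : ℕ) (hp : p.Prime) (u v : ℕ) (H : AddSubgroup (ℤ × ℤ))
    (h1 : ((p : ℤ) ^ u, (0 : ℤ)) ∈ H) (h2 : ((0 : ℤ), (p : ℤ) ^ v) ∈ H) :
    ∃ i ≤ u, ∃ j ≤ v, ∃ y < p ^ min i j, H = latt p u i j y := by
  obtain ⟨i, hi, hI⟩ := sub_int p hp u (H.map (AddMonoidHom.fst ℤ ℤ)) ⟨_, h1, rfl⟩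
  obtain ⟨j, hj, hJ⟩ := sub_int p hp v (H.comap (AddMonoidHom.inr ℤ ℤ)) h2
  simp only [AddSubgroup.mem_comap, AddMonoidHom.inr_apply] at hJ
  have hp0 : (p : ℤ) ≠ 0 := by exact_mod_cast hp.ne_zero
  obtain ⟨⟨a, x⟩, hx, hx'⟩ := (hI ((p : ℤ) ^ i)).2 dvd_rfl
  have hx'' : a = (p : ℤ) ^ i := hx'
  subst hx''
  have hd : (p : ℤ) ^ j ∣ (p : ℤ) ^ (u - i) * x := by
    rw [← hJ]
    have := H.sub_mem (H.zsmul_mem hx ((p : ℤ) ^ (u - i))) h1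
    convert this using 1
    ext
    · simp [← pow_add, Nat.sub_add_cancel hi]
    · simp
  set m := min (u - i) j with hm
  have hd2 : (p : ℤ) ^ (j - m) ∣ x := by
    rcases le_total (u - i) j with h | h
    · have : m = u - i := by omega
      rw [this]
      have e : (p : ℤ) ^ j = (p : ℤ) ^ (u - i) * (p : ℤ) ^ (j - (u - i)) := by
        rw [← pow_add]; congr 1; omega
      rw [e] at hd
      exact (mul_dvd_mul_iff_left (pow_ne_zero _ hp0)).1 hd
    · have : m = j := by omega
      simp [this]
  obtain ⟨w, rfl⟩ := hd2
  have hpm : (0 : ℤ) < (p : ℤ) ^ m := by have := hp.pos; positivity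
  have hy0 := Int.emod_nonneg w hpm.ne'
  have hy1 := Int.emod_lt_of_pos w hpm
  have hyc : (((w % (p : ℤ) ^ m).toNat : ℕ) : ℤ) = w % (p : ℤ) ^ m := Int.toNat_of_nonneg hy0
  have hxy : (p : ℤ) ^ j ∣ (p : ℤ) ^ (j - m) * w - (p : ℤ) ^ (j - m) * (w % (p : ℤ) ^ m) := by
    have e : (p : ℤ) ^ j = (p : ℤ) ^ (j - m) * (p : ℤ) ^ m := by
      rw [← pow_add]; congr 1; omega
    rw [e, ← mul_sub]
    exact mul_dvd_mul_left _ (Int.dvd_self_sub_emod)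
  refine ⟨u - i, by omega, j, hj, (w % (p : ℤ) ^ m).toNat, ?_, ?_⟩
  · have : (((w % (p : ℤ) ^ m).toNat : ℕ) : ℤ) < ((p ^ m : ℕ) : ℤ) := by
      rw [hyc]; push_cast; exact hy1
    exact_mod_cast this
  · have hui : u - (u - i) = i := by omega
    have key : ∀ (k b : ℤ), (k * (p : ℤ) ^ i, b) ∈ H ↔
        (p : ℤ) ^ j ∣ b - k * ((p : ℤ) ^ (j - m) * (w % (p : ℤ) ^ m)) := by
      intro k b
      have e1 : (k * (p : ℤ) ^ i, b) ∈ H ↔ (0, b - k * ((p : ℤ) ^ (j - m) * w)) ∈ H := by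
        have hk := H.zsmul_mem hx k
        rw [← H.add_mem_cancel_right hk (y := (0, b - k * ((p : ℤ) ^ (j - m) * w)))]
        simp
      rw [e1, hJ]
      have e2 : b - k * ((p : ℤ) ^ (j - m) * (w % (p : ℤ) ^ m)) =
        (b - k * ((p : ℤ) ^ (j - m) * w)) +
          k * ((p : ℤ) ^ (j - m) * w - (p : ℤ) ^ (j - m) * (w % (p : ℤ) ^ m)) := by ring
      rw [e2]
      exact (dvd_add_left (hxy.mul_left k)).symm
    ext ⟨a, b⟩
    change _ ↔ ∃ k : ℤ, a = k * (p : ℤ) ^ (u - (u - i)) ∧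
      (p : ℤ) ^ j ∣ b - k * ((p : ℤ) ^ (j - m) * ((w % (p : ℤ) ^ m).toNat : ℕ))
    rw [hui, hyc]
    constructor
    · intro h
      obtain ⟨k, hk⟩ := (hI a).1 ⟨_, h, rfl⟩
      rw [mul_comm] at hk
      subst hk
      exact ⟨k, rfl, (key k b).1 h⟩
    · rintro ⟨k, rfl, h⟩
      exact (key k b).2 h

/-- Reduction map. -/
def redMap (m n : ℕ) : ℤ × ℤ →+ ZMod m × ZMod n :=
  AddMonoidHom.prodMap (Int.castAddHom _) (Int.castAddHom _)

lemma redMap_surj (m n : ℕ) : Function.Surjective (redMap m n) := by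
  rintro ⟨a, b⟩
  obtain ⟨a, rfl⟩ := ZMod.intCast_surjective a
  obtain ⟨b, rfl⟩ := ZMod.intCast_surjective b
  exact ⟨(a, b), rfl⟩

lemma num_le (p : ℕ) (hp : p.Prime) (u v : ℕ) :
    numSubgroups (p ^ u) (p ^ v) ≤
      ∑ ij ∈ Finset.range (u + 1) ×ˢ Finset.range (v + 1), p ^ min ij.1 ij.2 := by
  classical
  let S : Finset (Σ _ : ℕ × ℕ, ℕ) := (Finset.range (u + 1) ×ˢ Finset.range (v + 1)).sigma
    (fun ij => Finset.range (p ^ min ij.1 ij.2))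
  have hS : S.card = ∑ ij ∈ Finset.range (u + 1) ×ˢ Finset.range (v + 1), p ^ min ij.1 ij.2 := by
    simp [S, Finset.card_sigma]
  have hS' : Nat.card S = S.card := by simp
  rw [← hS, ← hS']
  let f : S → AddSubgroup (ZMod (p ^ u) × ZMod (p ^ v)) := fun s =>
    (latt p u s.1.1.1 s.1.1.2 s.1.2).map (redMap _ _)
  refine Nat.card_le_card_of_surjective f ?_
  intro H
  obtain ⟨i, hi, j, hj, y, hy, h⟩ := exists_latt p hp u v (H.comap (redMap _ _))
    (by
      rw [AddSubgroup.mem_comap]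
      convert H.zero_mem
      have : ((p : ZMod (p ^ u)) ^ u) = 0 := by exact_mod_cast ZMod.natCast_self (p ^ u)
      simp [redMap, this])
    (by
      rw [AddSubgroup.mem_comap]
      convert H.zero_mem
      have : ((p : ZMod (p ^ v)) ^ v) = 0 := by exact_mod_cast ZMod.natCast_self (p ^ v)
      simp [redMap, this])
  refine ⟨⟨⟨(i, j), y⟩, ?_⟩, ?_⟩
  · simp only [S, Finset.mem_sigma, Finset.mem_product, Finset.mem_range]
    exact ⟨⟨by omega, by omega⟩, hy⟩
  · simp only [f]
    rw [← h]
    exact AddSubgroup.map_comap_eq_self_of_surjective (redMap_surj _ _) H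

lemma le_num (p : ℕ) (hp : p.Prime) (N : ℕ) : p ^ N ≤ numSubgroups (p ^ N) (p ^ N) := by
  have : NeZero (p ^ N) := ⟨pow_ne_zero _ hp.ne_zero⟩
  conv_lhs => rw [← Nat.card_zmod (p ^ N)]
  refine Nat.card_le_card_of_injective
    (fun y : ZMod (p ^ N) => (AddMonoidHom.mulLeft y).graph) ?_
  intro y z h
  have h1 : ((1 : ZMod (p ^ N)), y) ∈ (AddMonoidHom.mulLeft y).graph := by
    simp [AddMonoidHom.mem_graph]
  have h2 : ((1 : ZMod (p ^ N)), y) ∈ (AddMonoidHom.mulLeft z).graph := by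
    rw [← show (AddMonoidHom.mulLeft y).graph = (AddMonoidHom.mulLeft z).graph from h]; exact h1
  simp [AddMonoidHom.mem_graph] at h2
  exact h2.symm

lemma total_le (p : ℕ) (hp : p.Prime) (N : ℕ) :
    ∑ u ∈ Finset.range (2 * N + 1), numSubgroups (p ^ u) (p ^ (2 * N - u)) ≤
      ∑ m ∈ Finset.range (N + 1), (2 * (N - m) + 1) ^ 3 * p ^ m := by
  classical
  let T : Finset (Σ _ : ℕ, ℕ × ℕ) := (Finset.range (2 * N + 1)).sigma
    (fun u => Finset.range (u + 1) ×ˢ Finset.range (2 * N - u + 1))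
  have h1 : ∑ u ∈ Finset.range (2 * N + 1), numSubgroups (p ^ u) (p ^ (2 * N - u)) ≤
      ∑ t ∈ T, p ^ min t.2.1 t.2.2 := by
    rw [Finset.sum_sigma]
    exact Finset.sum_le_sum fun u _ => num_le p hp u _
  refine h1.trans ?_
  have hmaps : ∀ t ∈ T, min t.2.1 t.2.2 ∈ Finset.range (N + 1) := by
    rintro ⟨u, i, j⟩ ht
    simp only [T, Finset.mem_sigma, Finset.mem_product, Finset.mem_range] at ht ⊢
    omega
  rw [← Finset.sum_fiberwise_of_maps_to hmaps]
  refine Finset.sum_le_sum fun m hm => ?_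
  have e : ∑ t ∈ T with min t.2.1 t.2.2 = m, p ^ min t.2.1 t.2.2 =
      (T.filter (fun t => min t.2.1 t.2.2 = m)).card * p ^ m := by
    rw [Finset.sum_congr rfl (g := fun _ => p ^ m), Finset.sum_const, smul_eq_mul]
    intro t ht
    rw [(Finset.mem_filter.1 ht).2]
  rw [e]
  refine Nat.mul_le_mul_right _ ?_
  let I := Finset.Icc m (2 * N - m)
  have hm' : m ≤ N := by simpa [Nat.lt_succ_iff] using hm
  have hI : I.card = 2 * (N - m) + 1 := by simp only [I, Nat.card_Icc]; omega
  have hc : (I.sigma (fun _ => I ×ˢ I)).card = (2 * (N - m) + 1) ^ 3 := by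
    simp only [Finset.card_sigma, Finset.card_product, Finset.sum_const, hI, smul_eq_mul]; ring
  rw [← hc]
  refine Finset.card_le_card ?_
  rintro ⟨u, i, j⟩ ht
  simp only [T, I, Finset.mem_filter, Finset.mem_sigma, Finset.mem_product, Finset.mem_range,
    Finset.mem_Icc] at ht ⊢
  omega

lemma summ : Summable (fun k : ℕ => ((2 * (k : ℝ) + 3) ^ 3) * (1 / 2 : ℝ) ^ k) := by
  have h : ∀ d : ℕ, Summable (fun k : ℕ => (k : ℝ) ^ d * (1 / 2 : ℝ) ^ k) := fun d =>
    summable_pow_mul_geometric_of_norm_lt_one d (by norm_num)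
  have := (((h 3).mul_left 8).add ((h 2).mul_left 36)).add
    (((h 1).mul_left 54).add ((h 0).mul_left 27))
  refine this.congr fun k => ?_
  ring

theorem stmt13 : ∃ C : ℝ, ∀ p : ℕ, p.Prime → ∀ α : ℕ, 2 ≤ α → Even α →
    |(∑ u ∈ Finset.range (3 * α + 1),
        (numSubgroups (p ^ u) (p ^ (3 * α - u)) : ℝ)) - (p : ℝ) ^ (3 * α / 2)|
      ≤ C * (p : ℝ) ^ (3 * α / 2 - 1) := by
  refine ⟨∑' k : ℕ, ((2 * (k : ℝ) + 3) ^ 3) * (1 / 2 : ℝ) ^ k, ?_⟩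
  intro p hp α hα hev
  obtain ⟨M, hM⟩ : ∃ M, 3 * α = 2 * (M + 1) := by
    obtain ⟨r, rfl⟩ := hev
    exact ⟨3 * r - 1, by omega⟩
  have hN : 3 * α / 2 = M + 1 := by omega
  rw [hN, hM, Nat.add_sub_cancel]
  have hlow : p ^ (M + 1) ≤
      ∑ u ∈ Finset.range (2 * (M + 1) + 1), numSubgroups (p ^ u) (p ^ (2 * (M + 1) - u)) := by
    refine (le_num p hp (M + 1)).trans ?_
    have := Finset.single_le_sum
      (f := fun u => numSubgroups (p ^ u) (p ^ (2 * (M + 1) - u)))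
      (s := Finset.range (2 * (M + 1) + 1)) (fun _ _ => Nat.zero_le _)
      (a := M + 1) (by rw [Finset.mem_range]; omega)
    have e : 2 * (M + 1) - (M + 1) = M + 1 := by omega
    simpa only [e] using this
  have hup := total_le p hp (M + 1)
  rw [Finset.sum_range_succ (fun m => (2 * (M + 1 - m) + 1) ^ 3 * p ^ m),
    ← Finset.sum_range_reflect (fun m => (2 * (M + 1 - m) + 1) ^ 3 * p ^ m)] at hup
  simp only [Nat.sub_self, mul_zero, zero_add, one_pow, one_mul] at hup
  have hlow' : (p : ℝ) ^ (M + 1) ≤ ∑ u ∈ Finset.range (2 * (M + 1) + 1),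
      (numSubgroups (p ^ u) (p ^ (2 * (M + 1) - u)) : ℝ) := by exact_mod_cast hlow
  have hup' : (∑ u ∈ Finset.range (2 * (M + 1) + 1),
      (numSubgroups (p ^ u) (p ^ (2 * (M + 1) - u)) : ℝ)) ≤
      ((∑ k ∈ Finset.range (M + 1), (2 * (M + 1 - (M + 1 - 1 - k)) + 1) ^ 3 *
        p ^ (M + 1 - 1 - k) : ℕ) : ℝ) + (p : ℝ) ^ (M + 1) := by exact_mod_cast hup
  rw [abs_of_nonneg (by linarith)]
  have hfin : ((∑ k ∈ Finset.range (M + 1), (2 * (M + 1 - (M + 1 - 1 - k)) + 1) ^ 3 *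
        p ^ (M + 1 - 1 - k) : ℕ) : ℝ) ≤
      (∑' k : ℕ, ((2 * (k : ℝ) + 3) ^ 3) * (1 / 2 : ℝ) ^ k) * (p : ℝ) ^ M := by
    have hs := summ.sum_le_tsum (Finset.range (M + 1)) (fun k _ => by positivity)
    refine le_trans ?_ (mul_le_mul_of_nonneg_right hs (by positivity))
    rw [Finset.sum_mul, Nat.cast_sum]
    refine Finset.sum_le_sum fun k hk => ?_
    have hk' : k ≤ M := by simpa [Nat.lt_succ_iff] using hk
    have e1 : M + 1 - (M + 1 - 1 - k) = k + 1 := by omega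
    have e2 : M + 1 - 1 - k = M - k := by omega
    rw [e1, e2, Nat.cast_mul, Nat.cast_pow, Nat.cast_pow, mul_assoc]
    push_cast
    have e3 : (2 * ((k : ℝ) + 1) + 1) = 2 * k + 3 := by ring
    rw [e3]
    refine mul_le_mul_of_nonneg_left ?_ (by positivity)
    have hp2 : (2 : ℝ) ≤ p := by exact_mod_cast hp.two_le
    have e4 : (p : ℝ) ^ M = (p : ℝ) ^ k * (p : ℝ) ^ (M - k) := by
      rw [← pow_add]; congr 1; omega
    rw [e4, ← mul_assoc, ← mul_pow]
    exact le_mul_of_one_le_left (by positivity) (one_le_pow₀ (by linarith))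
  linarith
end

section
/- For all positive integers m₁ and m₂, the number of subgroups of ℤ_{m₁} × ℤ_{m₂} satisfies s(m₁,m₂) ≤ gcd(m₁,m₂) · τ(m₁) · τ(m₂), where τ(n) is the number of divisors of n. -/
open Classical in
theorem aux_card_eq {G : Type*} [AddCommGroup G] [Fintype G] [IsAddCyclic G] (H : AddSubgroup G) :
    (H : Set G) = {x | Nat.card H • x = 0} := by
  have hsub : (Finset.univ.filter (fun x : G => x ∈ H)) ⊆
      Finset.univ.filter (fun x : G => Nat.card H • x = 0) := by
    intro x hx
    simp only [Finset.mem_filter, Finset.mem_univ, true_and] at hx ⊢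
    have h : Nat.card H • (⟨x, hx⟩ : H) = 0 := card_nsmul_eq_zero'
    exact congrArg Subtype.val h
  have hle : (Finset.univ.filter (fun x : G => Nat.card H • x = 0)).card ≤
      (Finset.univ.filter (fun x : G => x ∈ H)).card := by
    refine (IsAddCyclic.card_nsmul_eq_zero_le Nat.card_pos).trans (le_of_eq ?_)
    rw [Nat.card_eq_fintype_card]
    exact Fintype.card_subtype _
  have := Finset.eq_of_subset_of_card_le hsub hle
  ext x
  have := Finset.ext_iff.1 this x
  simpa using this

open Classical in
theorem aux_num (m : ℕ) (h : 0 < m) :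
    Nat.card (AddSubgroup (ZMod m)) ≤ m.divisors.card := by
  have : NeZero m := ⟨h.ne'⟩
  rw [Nat.card_eq_fintype_card, ← Finset.card_univ]
  refine Finset.card_le_card_of_injOn (fun H => Nat.card H) ?_ ?_
  · intro H _
    have := AddSubgroup.card_addSubgroup_dvd_card H
    rw [Nat.card_zmod] at this
    exact Finset.mem_coe.2 (Nat.mem_divisors.2 ⟨this, h.ne'⟩)
  · intro H _ K _ hHK
    apply SetLike.coe_injective
    rw [aux_card_eq H, aux_card_eq K]
    simp only at hHK
    rw [hHK]

theorem aux_mem {G₁ G₂ : Type*} [AddCommGroup G₁] [AddCommGroup G₂]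
    (H : AddSubgroup (G₁ × G₂)) (a : G₁) (x : G₂)
    (ha : H.map (AddMonoidHom.fst G₁ G₂) = AddSubgroup.zmultiples a) (hx : (a, x) ∈ H)
    (p : G₁ × G₂) :
    p ∈ H ↔ ∃ k : ℤ, p.1 = k • a ∧ p.2 - k • x ∈ H.comap (AddMonoidHom.inr G₁ G₂) := by
  have key : ∀ k : ℤ, p.1 = k • a → p - k • (a, x) = (0, p.2 - k • x) := by
    intro k hk
    ext <;> simp [hk]
  constructor
  · intro hp
    have h1 : p.1 ∈ H.map (AddMonoidHom.fst G₁ G₂) := ⟨p, hp, rfl⟩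
    rw [ha, AddSubgroup.mem_zmultiples_iff] at h1
    obtain ⟨k, hk⟩ := h1
    refine ⟨k, hk.symm, ?_⟩
    have := H.sub_mem hp (H.zsmul_mem hx k)
    rw [key k hk.symm] at this
    simpa using this
  · rintro ⟨k, hk, h2⟩
    have h3 : (0, p.2 - k • x) ∈ H := by simpa using h2
    rw [← key k hk] at h3
    have := H.add_mem h3 (H.zsmul_mem hx k)
    simpa using this

open Classical in
theorem aux_main (m₁ m₂ : ℕ) (h₁ : 0 < m₁) (h₂ : 0 < m₂) :
    Nat.card (AddSubgroup (ZMod m₁ × ZMod m₂)) ≤ Nat.gcd m₁ m₂ *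
      (Nat.card (AddSubgroup (ZMod m₁)) * Nat.card (AddSubgroup (ZMod m₂))) := by
  have : NeZero m₁ := ⟨h₁.ne'⟩
  have : NeZero m₂ := ⟨h₂.ne'⟩
  have hgen : ∀ A : AddSubgroup (ZMod m₁), ∃ a, A = AddSubgroup.zmultiples a := by
    intro A
    obtain ⟨a, ha⟩ := (AddSubgroup.isAddCyclic_iff_exists_zmultiples_eq_top A).1 inferInstance
    exact ⟨a, ha.symm⟩
  choose gen hg using hgen
  have hlift : ∀ H : AddSubgroup (ZMod m₁ × ZMod m₂), ∃ x,
      (gen (H.map (AddMonoidHom.fst _ _)), x) ∈ H := by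
    intro H
    have : gen (H.map (AddMonoidHom.fst _ _)) ∈ H.map (AddMonoidHom.fst _ _) := by
      exact (hg (H.map (AddMonoidHom.fst _ _))).ge (AddSubgroup.mem_zmultiples _)
    obtain ⟨⟨u, x⟩, hp, hu⟩ := this
    refine ⟨x, ?_⟩
    rw [← hu]
    exact hp
  choose X hX using hlift
  rw [← Nat.card_prod]
  simp only [Nat.card_eq_fintype_card, ← Finset.card_univ]
  refine Finset.card_le_mul_card_image_of_maps_to
    (f := fun H => (H.map (AddMonoidHom.fst _ _), H.comap (AddMonoidHom.inr _ _)))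
    (fun _ _ => Finset.mem_univ _) _ ?_
  rintro ⟨A, B⟩ _
  have : IsAddCyclic (ZMod m₂ ⧸ B) :=
    isAddCyclic_of_surjective (QuotientAddGroup.mk' B) (QuotientAddGroup.mk'_surjective B)
  refine le_trans ?_ (IsAddCyclic.card_nsmul_eq_zero_le (α := ZMod m₂ ⧸ B)
    (Nat.gcd_pos_of_pos_left m₂ h₁))
  refine Finset.card_le_card_of_injOn (fun H => (X H : ZMod m₂ ⧸ B)) ?_ ?_
  · intro H hH
    simp only [Finset.coe_filter, Finset.mem_univ, true_and, Set.mem_ofPred_eq,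
      Prod.mk.injEq] at hH ⊢
    obtain ⟨hA, hB⟩ := hH
    have e1 : m₁ • (X H : ZMod m₂ ⧸ B) = 0 := by
      rw [← QuotientAddGroup.mk_nsmul, QuotientAddGroup.eq_zero_iff, ← hB]
      have := H.nsmul_mem (hX H) m₁
      simpa using this
    have e2 : m₂ • (X H : ZMod m₂ ⧸ B) = 0 := by
      rw [← QuotientAddGroup.mk_nsmul]
      simp
    exact addOrderOf_dvd_iff_nsmul_eq_zero.1 (Nat.dvd_gcd
      (addOrderOf_dvd_iff_nsmul_eq_zero.2 e1) (addOrderOf_dvd_iff_nsmul_eq_zero.2 e2))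
  · intro H hH K hK hHK
    simp only [Finset.coe_filter, Finset.mem_univ, true_and, Set.mem_ofPred_eq,
      Prod.mk.injEq] at hH hK hHK
    have hxH := hX H
    have hxK := hX K
    rw [hH.1] at hxH
    rw [hK.1] at hxK
    have hd : X H - X K ∈ B := by
      rw [← QuotientAddGroup.eq_zero_iff, QuotientAddGroup.mk_sub, hHK, sub_self]
    ext p
    rw [aux_mem H _ _ (hH.1.trans (hg A)) hxH, aux_mem K _ _ (hK.1.trans (hg A)) hxK, hH.2, hK.2]
    refine exists_congr fun k => and_congr_right fun _ => ?_
    have : p.2 - k • X K = (p.2 - k • X H) + k • (X H - X K) := by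
      rw [smul_sub]; abel
    rw [this]
    exact (B.add_mem_cancel_right (B.zsmul_mem hd k)).symm

theorem stmt14 (m₁ m₂ : ℕ) (h₁ : 0 < m₁) (h₂ : 0 < m₂) :
    numSubgroups m₁ m₂ ≤ Nat.gcd m₁ m₂ * m₁.divisors.card * m₂.divisors.card := by
  rw [mul_assoc]
  exact (aux_main m₁ m₂ h₁ h₂).trans
    (Nat.mul_le_mul_left _ (Nat.mul_le_mul (aux_num m₁ h₁) (aux_num m₂ h₂)))
end

section
/- There is a constant C such that for all real x ≥ 2, | ∑_{1 ≤ u ≤ x^{1/3}} u · ψ(x/u²) | ≤ C x^{5/9} log x, where ψ(t) := t − ⌊t⌋ − 1/2 and the sum is over integers u with 1 ≤ u ≤ x^{1/3}. -/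
/-- Sum of the sawtooth function over a complete residue system. -/
lemma saw_complete (q : ℕ) (hq : 0 < q) (a : ℤ) (ha : IsCoprime a (q : ℤ)) (β : ℝ) :
    |∑ j ∈ Finset.range q, (Int.fract (β + a * j / q) - 1 / 2)| ≤ 1 / 2 := by
  have hq' : (0 : ℝ) < q := by exact_mod_cast hq
  have hqz : (0 : ℤ) < q := by exact_mod_cast hq
  set n : ℤ := ⌊q * β⌋ with hn
  set δ : ℝ := Int.fract (q * β) with hδ
  have hδ0 : 0 ≤ δ := Int.fract_nonneg _
  have hδ1 : δ < 1 := Int.fract_lt_one _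
  have hβ : (q : ℝ) * β = n + δ := (Int.floor_add_fract _).symm
  have key : ∀ j : ℕ, Int.fract (β + a * j / q)
      = ((((n + a * j) % (q : ℤ)).toNat : ℕ) : ℝ) / q + δ / q := by
    intro j
    have h0 : 0 ≤ (n + a * j) % (q : ℤ) := Int.emod_nonneg _ hqz.ne'
    have h1 : (n + a * j) % (q : ℤ) < q := Int.emod_lt_of_pos _ hqz
    have h2 : (q : ℤ) * ((n + a * j) / q) + (n + a * j) % (q : ℤ) = n + a * j :=
      Int.mul_ediv_add_emod _ _
    have hc : ((((n + a * j) % (q : ℤ)).toNat : ℕ) : ℝ) = (((n + a * j) % (q : ℤ) : ℤ) : ℝ) := by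
      have : ((((n + a * j) % (q : ℤ)).toNat : ℕ) : ℤ) = (n + a * j) % (q : ℤ) :=
        Int.toNat_of_nonneg h0
      exact_mod_cast this
    rw [hc]
    generalize (n + a * j) % (q : ℤ) = r at *
    generalize (n + a * j) / (q : ℤ) = k at *
    have h2' : (q : ℝ) * k + r = n + a * j := by exact_mod_cast h2
    have h0' : (0 : ℝ) ≤ r := by exact_mod_cast h0
    have h1' : (r : ℝ) + 1 ≤ q := by exact_mod_cast h1
    rw [Int.fract_eq_iff]
    refine ⟨by positivity, ?_, k, ?_⟩
    · rw [← add_div, div_lt_one hq']; linarith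
    · field_simp
      linarith
  have hinj : Set.InjOn (fun j : ℕ => ((n + a * j) % (q : ℤ)).toNat) (Finset.range q) := by
    intro i hi j hj hij
    simp only [Finset.coe_range, Set.mem_Iio] at hi hj
    simp only at hij
    have h0 : ∀ i : ℕ, 0 ≤ (n + a * i) % (q : ℤ) := fun i => Int.emod_nonneg _ hqz.ne'
    have : (n + a * i) % (q : ℤ) = (n + a * j) % (q : ℤ) := by
      have := h0 i; have := h0 j; omega
    have h3 : (q : ℤ) ∣ (n + a * j) - (n + a * i) := (Int.ModEq.dvd this)
    have h4 : (q : ℤ) ∣ a * ((j : ℤ) - i) := by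
      convert h3 using 1; ring
    have h5 : (q : ℤ) ∣ (j : ℤ) - i := (ha.symm).dvd_of_dvd_mul_left h4
    have h6 : (j : ℤ) - i = 0 := by
      apply Int.eq_zero_of_abs_lt_dvd h5
      rw [abs_lt]; constructor <;> omega
    omega
  have himg : (Finset.range q).image (fun j : ℕ => ((n + a * j) % (q : ℤ)).toNat)
      = Finset.range q := by
    apply Finset.eq_of_subset_of_card_le
    · intro y hy
      simp only [Finset.mem_image, Finset.mem_range] at hy ⊢
      obtain ⟨j, _, rfl⟩ := hy
      have h0 : 0 ≤ (n + a * j) % (q : ℤ) := Int.emod_nonneg _ hqz.ne'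
      have h1 : (n + a * j) % (q : ℤ) < q := Int.emod_lt_of_pos _ hqz
      omega
    · rw [Finset.card_image_of_injOn hinj]
  have hsum : ∑ j ∈ Finset.range q, ((((n + a * j) % (q : ℤ)).toNat : ℕ) : ℝ)
      = ∑ r ∈ Finset.range q, (r : ℝ) := by
    conv_rhs => rw [← himg]
    rw [Finset.sum_image hinj]
  have hg : ∑ r ∈ Finset.range q, (r : ℝ) = q * (q - 1) / 2 := by
    clear * -
    induction q with
    | zero => simp
    | succ k ih => rw [Finset.sum_range_succ, ih]; push_cast; ring
  have htot : ∑ j ∈ Finset.range q, (Int.fract (β + a * j / q) - 1 / 2) = δ - 1 / 2 := by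
    simp only [key]
    rw [Finset.sum_sub_distrib, Finset.sum_add_distrib, ← Finset.sum_div, hsum, hg]
    simp only [Finset.sum_const, Finset.card_range, nsmul_eq_mul]
    field_simp
    ring
  rw [htot, abs_le]
  constructor <;> linarith

lemma fract_step (t s : ℝ) (hs : 0 ≤ s) : Int.fract (t + s) ≤ Int.fract t + s := by
  have : ⌊t⌋ ≤ ⌊t + s⌋ := Int.floor_mono (by linarith)
  have h : (⌊t⌋ : ℝ) ≤ ⌊t + s⌋ := by exact_mod_cast this
  unfold Int.fract
  linarith

/-- Perturbed complete sum. -/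
lemma saw_block (q : ℕ) (hq : 0 < q) (a : ℤ) (ha : IsCoprime a (q : ℤ)) (β K : ℝ)
    (f : ℕ → ℝ) (hf : ∀ j ∈ Finset.range q, |f j - (β + a * j / q)| ≤ K / q) :
    |∑ j ∈ Finset.range q, (Int.fract (f j) - 1 / 2)| ≤ 1 / 2 + 2 * K := by
  have hq' : (0 : ℝ) < q := by exact_mod_cast hq
  have hc : ∑ j ∈ Finset.range q, (2 * K / q : ℝ) = 2 * K := by
    simp only [Finset.sum_const, Finset.card_range, nsmul_eq_mul]
    field_simp
  have h1 := abs_le.mp (saw_complete q hq a ha (β - K / q))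
  have h2 := abs_le.mp (saw_complete q hq a ha (β + K / q))
  have h3 : ∑ j ∈ Finset.range q, (Int.fract (f j) - 1 / 2)
      ≤ ∑ j ∈ Finset.range q, ((Int.fract (β - K / q + a * j / q) - 1 / 2) + 2 * K / q) := by
    apply Finset.sum_le_sum
    intro j hj
    have := abs_le.mp (hf j hj)
    have h := fract_step (β - K / q + a * j / q) (f j - (β - K / q + a * j / q)) (by linarith)
    rw [add_sub_cancel] at h
    have e : 2 * K / q = K / q + K / q := by ring
    linarith
  have h4 : ∑ j ∈ Finset.range q, ((Int.fract (β + K / q + a * j / q) - 1 / 2) - 2 * K / q)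
      ≤ ∑ j ∈ Finset.range q, (Int.fract (f j) - 1 / 2) := by
    apply Finset.sum_le_sum
    intro j hj
    have := abs_le.mp (hf j hj)
    have h := fract_step (f j) (β + K / q + a * j / q - f j) (by linarith)
    rw [add_sub_cancel] at h
    have e : 2 * K / q = K / q + K / q := by ring
    linarith
  rw [Finset.sum_add_distrib, hc] at h3
  rw [Finset.sum_sub_distrib, hc] at h4
  rw [abs_le]
  constructor <;> linarith

/-- Greedy decomposition into blocks. -/
lemma greedy (h : ℕ → ℝ) (q : ℕ → ℕ) (hq : ∀ m, 1 ≤ q m) (c t : ℝ) (ht : 0 ≤ t) (B : ℕ) :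
    ∀ n A : ℕ, B - A ≤ n → A ≤ B →
    (∀ m, A ≤ m → m + q m ≤ B → |∑ u ∈ Finset.Ico m (m + q m), h u| ≤ c) →
    (∀ m, A ≤ m → m ≤ B → B < m + q m → |∑ u ∈ Finset.Ico m B, h u| ≤ t) →
    ∃ S : Finset ℕ, (∀ m ∈ S, A ≤ m ∧ m < B) ∧
      (∀ m ∈ S, ∀ m' ∈ S, m < m' → m + q m ≤ m') ∧
      |∑ u ∈ Finset.Ico A B, h u| ≤ c * S.card + t := by
  intro n
  induction n with
  | zero =>
    intro A hA hAB _ _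
    have : A = B := by omega
    subst this
    exact ⟨∅, by simp, by simp, by simpa using ht⟩
  | succ n ih =>
    intro A hA hAB hb htl
    by_cases hlt : B < A + q A
    · exact ⟨∅, by simp, by simp, by simpa using htl A le_rfl hAB hlt⟩
    · push Not at hlt
      have hqA := hq A
      obtain ⟨S, hS1, hS2, hS3⟩ := ih (A + q A) (by omega) hlt
        (fun m hm => hb m (by omega)) (fun m hm => htl m (by omega))
      have hnot : A ∉ S := fun hA' => by have := (hS1 A hA').1; omega
      refine ⟨insert A S, ?_, ?_, ?_⟩
      · intro m hm
        rcases Finset.mem_insert.mp hm with rfl | hm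
        · omega
        · have := hS1 m hm; omega
      · intro m hm m' hm' hmm
        rcases Finset.mem_insert.mp hm with h1 | h1
        · rcases Finset.mem_insert.mp hm' with h2 | h2
          · omega
          · rw [h1]; exact (hS1 m' h2).1
        · rcases Finset.mem_insert.mp hm' with h2 | h2
          · have := hS1 m h1; omega
          · exact hS2 m h1 m' h2 hmm
      · rw [Finset.card_insert_of_notMem hnot,
          ← Finset.sum_Ico_consecutive h (show A ≤ A + q A by omega) hlt]
        have h1 := hb A le_rfl hlt
        have h2 := abs_add_le (∑ u ∈ Finset.Ico A (A + q A), h u)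
          (∑ u ∈ Finset.Ico (A + q A) B, h u)
        push_cast
        linarith

/-- Spaced sets inside a short interval are small. -/
lemma spaced_card (F : Finset ℕ) (q : ℕ) (hq : 0 < q) (D : ℝ) (hD : 0 ≤ D)
    (hsp : ∀ m ∈ F, ∀ m' ∈ F, m < m' → m + q ≤ m')
    (hdiff : ∀ m ∈ F, ∀ m' ∈ F, m < m' → (m' : ℝ) - m ≤ D) :
    (F.card : ℝ) ≤ 1 + D / q := by
  have hq' : (0 : ℝ) < q := by exact_mod_cast hq
  rcases F.eq_empty_or_nonempty with rfl | hne
  · simp; positivity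
  set m0 := F.min' hne with hm0
  have hm0F : m0 ∈ F := F.min'_mem hne
  have hcard : F.card ≤ (Finset.range (⌊D / q⌋₊ + 1)).card := by
    apply Finset.card_le_card_of_injOn (fun m => (m - m0) / q)
    · intro m hm
      have hle : m0 ≤ m := F.min'_le m hm
      simp only [Finset.coe_range, Set.mem_Iio]
      apply Nat.lt_succ_of_le
      apply Nat.le_floor
      have h1 : (((m - m0) / q : ℕ) : ℝ) ≤ ((m - m0 : ℕ) : ℝ) / q := Nat.cast_div_le
      refine h1.trans ?_
      gcongr
      rw [Nat.cast_sub hle]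
      rcases hle.eq_or_lt with h | h
      · rw [← h]; simpa using hD
      · exact hdiff m0 hm0F m hm h
    · have main : ∀ m ∈ F, ∀ m' ∈ F, m < m' → (m - m0) / q ≠ (m' - m0) / q := by
        intro m hm m' hm' hlt heq
        have h1 := hsp m hm m' hm' hlt
        have hle : m0 ≤ m := F.min'_le m hm
        have h2 : (m - m0 + q) / q ≤ (m' - m0) / q := Nat.div_le_div_right (by omega)
        rw [Nat.add_div_right _ hq] at h2
        omega
      intro m hm m' hm' heq
      rcases lt_trichotomy m m' with h | h | h
      · exact absurd heq (main m hm m' hm' h)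
      · exact h
      · exact absurd heq.symm (main m' hm' m hm h)
  rw [Finset.card_range] at hcard
  have h2 : (F.card : ℝ) ≤ (⌊D / q⌋₊ : ℝ) + 1 := by exact_mod_cast hcard
  have h3 := Nat.floor_le (show 0 ≤ D / q by positivity)
  linarith

lemma slope_diff (x U a b : ℝ) (hx : 0 < x) (ha : 0 < a) (hab : a ≤ b)
    (hb : b ≤ 2 * U) : (3 / 8) * x * (b - a) / U ^ 4 ≤ 2 * x / a ^ 3 - 2 * x / b ^ 3 := by
  have hb0 : 0 < b := by linarith
  have hU : 0 < U := by linarith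
  have ha2 : a ≤ 2 * U := by linarith
  have e : 2 * x / a ^ 3 - 2 * x / b ^ 3
      = 2 * x * (b - a) * (1 / (a * b ^ 3) + 1 / (a ^ 2 * b ^ 2) + 1 / (a ^ 3 * b)) := by
    field_simp
    ring
  have h1 : 1 / (16 * U ^ 4) ≤ 1 / (a * b ^ 3) := by
    apply one_div_le_one_div_of_le (by positivity)
    calc a * b ^ 3 ≤ (2 * U) * (2 * U) ^ 3 := by gcongr
      _ = 16 * U ^ 4 := by ring
  have h2 : 1 / (16 * U ^ 4) ≤ 1 / (a ^ 2 * b ^ 2) := by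
    apply one_div_le_one_div_of_le (by positivity)
    calc a ^ 2 * b ^ 2 ≤ (2 * U) ^ 2 * (2 * U) ^ 2 := by gcongr
      _ = 16 * U ^ 4 := by ring
  have h3 : 1 / (16 * U ^ 4) ≤ 1 / (a ^ 3 * b) := by
    apply one_div_le_one_div_of_le (by positivity)
    calc a ^ 3 * b ≤ (2 * U) ^ 3 * (2 * U) := by gcongr
      _ = 16 * U ^ 4 := by ring
  rw [e]
  have h4 : 0 ≤ 2 * x * (b - a) := by
    have : 0 ≤ b - a := by linarith
    positivity
  calc (3 / 8) * x * (b - a) / U ^ 4 = 2 * x * (b - a) * (3 * (1 / (16 * U ^ 4))) := by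
        field_simp; ring
    _ ≤ _ := by
        apply mul_le_mul_of_nonneg_left _ h4
        linarith

lemma count_blocks (x T : ℝ) (U Q : ℕ) (hx : 0 < x) (hU : 0 < U) (hUx : (U : ℝ) ^ 3 ≤ x)
    (hT : 1 ≤ T) (hTx : T ^ 3 * x = (U : ℝ) ^ 4) (hQT : (Q : ℝ) ≤ T) (hTQ : T < Q + 1)
    (r : ℕ → ℚ) (hr : ∀ m : ℕ, |2 * x / (m : ℝ) ^ 3 - r m| ≤ 1 / (((Q : ℝ) + 1) * ((r m).den : ℝ)))
    (hrQ : ∀ m, (r m).den ≤ Q) (S : Finset ℕ) (hS : ∀ m ∈ S, U ≤ m ∧ m ≤ 2 * U)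
    (hsp : ∀ m ∈ S, ∀ m' ∈ S, m < m' → m + (r m).den ≤ m') :
    (S.card : ℝ) ≤ 28 * (U / T) * (1 + Real.log T) := by
  have hU' : (0 : ℝ) < U := by exact_mod_cast hU
  have hT0 : 0 < T := by linarith
  set X : ℝ := x / U ^ 3 with hX
  have hX1 : 1 ≤ X := by rw [hX, one_le_div (by positivity)]; exact hUx
  have hXT : X * T ^ 2 = U / T := by
    rw [hX]; field_simp; linarith
  have hQ1 : (1 : ℝ) ≤ Q := by
    have h1 : (r 0).den ≤ Q := hrQ 0
    have h2 : 0 < (r 0).den := (r 0).den_pos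
    have : 1 ≤ Q := by omega
    exact_mod_cast this
  have hnum : ∀ m : ℕ, |((r m).den : ℝ) * (2 * x / (m : ℝ) ^ 3) - (r m).num| ≤ 1 / ((Q : ℝ) + 1) := by
    intro m
    have hd : (0 : ℝ) < (r m).den := by exact_mod_cast (r m).den_pos
    have h := hr m
    have e : ((r m).den : ℝ) * (2 * x / (m : ℝ) ^ 3) - (r m).num
        = (r m).den * (2 * x / (m : ℝ) ^ 3 - r m) := by
      have : ((r m : ℚ) : ℝ) = (r m).num / (r m).den := Rat.cast_def _
      rw [this]; field_simp
    rw [e, abs_mul, abs_of_pos hd]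
    calc ((r m).den : ℝ) * |2 * x / (m : ℝ) ^ 3 - r m|
        ≤ (r m).den * (1 / ((Q + 1) * (r m).den)) := by gcongr
      _ = 1 / (Q + 1) := by field_simp
  have hhalf : 1 / ((Q : ℝ) + 1) ≤ 1 / 2 := one_div_le_one_div_of_le (by norm_num) (by linarith)
  have hnn : ∀ m, 0 ≤ (r m).num := by
    intro m
    have h := abs_le.mp (hnum m)
    have h1 : 0 ≤ ((r m).den : ℝ) * (2 * x / (m : ℝ) ^ 3) := by positivity
    have h2 : (-1 : ℝ) < (r m).num := by linarith
    have h3 : (-1 : ℤ) < (r m).num := by exact_mod_cast h2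
    omega
  have hup : ∀ m ∈ S, ((r m).num : ℝ) ≤ 3 * (r m).den * X := by
    intro m hm
    have h := abs_le.mp (hnum m)
    have hd : (1 : ℝ) ≤ (r m).den := by exact_mod_cast (r m).den_pos
    have hUm : (U : ℝ) ≤ m := by exact_mod_cast (hS m hm).1
    have h1 : 2 * x / (m : ℝ) ^ 3 ≤ 2 * X := by
      rw [hX, ← mul_div_assoc]; gcongr
    have h2 : ((r m).den : ℝ) * (2 * x / (m : ℝ) ^ 3) ≤ (r m).den * (2 * X) := by gcongr
    have h3 : 1 ≤ (r m).den * X := by nlinarith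
    nlinarith
  have step : ∀ q ∈ Finset.Icc 1 Q, (((S.filter (fun m => (r m).den = q)).card : ℕ) : ℝ)
      ≤ 4 * X * q + 24 * (X * T ^ 2) * (1 / q) := by
    intro q hq
    have hq1 : 1 ≤ q := (Finset.mem_Icc.mp hq).1
    have hq1' : (1 : ℝ) ≤ q := by exact_mod_cast hq1
    have hq0 : (0 : ℝ) < q := by linarith
    set N : ℕ := ⌊3 * q * X⌋₊ + 1 with hN
    have hmaps : ((S.filter (fun m => (r m).den = q) : Finset ℕ) : Set ℕ).MapsTo
        (fun m => (r m).num.toNat) (Finset.range N : Finset ℕ) := by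
      intro m hm
      simp only [Finset.coe_filter, Set.mem_ofPred_eq] at hm
      simp only [Finset.coe_range, Set.mem_Iio, hN]
      apply Nat.lt_succ_of_le
      apply Nat.le_floor
      have h1 := hup m hm.1
      rw [hm.2] at h1
      have h2 : (((r m).num.toNat : ℕ) : ℤ) = (r m).num := Int.toNat_of_nonneg (hnn m)
      have h3 : (((r m).num.toNat : ℕ) : ℝ) = (r m).num := by exact_mod_cast h2
      rw [h3]; exact h1
    rw [Finset.card_eq_sum_card_fiberwise hmaps]
    push_cast
    have hfib : ∀ a ∈ Finset.range N,
        ((((S.filter (fun m => (r m).den = q)).filter (fun m => (r m).num.toNat = a)).card : ℕ) : ℝ)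
        ≤ 1 + (6 * T ^ 2 / q) / q := by
      intro a _
      apply spaced_card _ q hq1 _ (by positivity)
      · intro m hm m' hm' hlt
        simp only [Finset.mem_filter] at hm hm'
        have := hsp m hm.1.1 m' hm'.1.1 hlt
        rw [hm.1.2] at this
        exact this
      · intro m hm m' hm' hlt
        simp only [Finset.mem_filter] at hm hm'
        have hn : (r m).num = (r m').num := by
          have := hnn m; have := hnn m'; have := hm.2; have := hm'.2; omega
        have h1 := abs_le.mp (hnum m)
        have h2 := abs_le.mp (hnum m')
        rw [hm.1.2] at h1
        rw [hm'.1.2, ← hn] at h2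
        have hm0 : (0 : ℝ) < m := by
          have : U ≤ m := (hS m hm.1.1).1
          have : 0 < m := by omega
          exact_mod_cast this
        have hm2 : (m' : ℝ) ≤ 2 * U := by exact_mod_cast (hS m' hm'.1.1).2
        have hmm : (m : ℝ) ≤ m' := by exact_mod_cast hlt.le
        have h3 := slope_diff x U m m' hx hm0 hmm hm2
        have h4 : 1 / ((Q : ℝ) + 1) ≤ 1 / T := one_div_le_one_div_of_le hT0 hTQ.le
        have h5 : (3 / 8) * x * ((m' : ℝ) - m) / U ^ 4 = (3 / 8) * ((m' : ℝ) - m) / T ^ 3 := by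
          rw [← hTx]; field_simp
        rw [h5] at h3
        have h6 : (q : ℝ) * ((3 / 8) * ((m' : ℝ) - m) / T ^ 3) ≤ 2 * (1 / T) := by
          calc (q : ℝ) * ((3 / 8) * ((m' : ℝ) - m) / T ^ 3)
              ≤ q * (2 * x / (m : ℝ) ^ 3 - 2 * x / (m' : ℝ) ^ 3) := by gcongr
            _ ≤ 2 * (1 / T) := by linarith
        have h7 : (q : ℝ) * ((3 / 8) * ((m' : ℝ) - m)) ≤ 2 * T ^ 2 := by
          have := mul_le_mul_of_nonneg_right h6 (show 0 ≤ T ^ 3 by positivity)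
          have e1 : (q : ℝ) * ((3 / 8) * ((m' : ℝ) - m) / T ^ 3) * T ^ 3
            = (q : ℝ) * ((3 / 8) * ((m' : ℝ) - m)) := by field_simp
          have e2 : 2 * (1 / T) * T ^ 3 = 2 * T ^ 2 := by field_simp
          rw [e1, e2] at this
          exact this
        rw [le_div_iff₀ hq0]
        have : 0 ≤ T ^ 2 := by positivity
        linarith
    refine (Finset.sum_le_sum hfib).trans ?_
    rw [Finset.sum_const, Finset.card_range, nsmul_eq_mul]
    have hNr : (N : ℝ) ≤ 4 * q * X := by
      rw [hN]; push_cast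
      have := Nat.floor_le (show 0 ≤ 3 * (q : ℝ) * X by positivity)
      have : 1 ≤ q * X := by nlinarith
      linarith
    calc (N : ℝ) * (1 + (6 * T ^ 2 / q) / q) ≤ (4 * q * X) * (1 + (6 * T ^ 2 / q) / q) := by gcongr
      _ = _ := by field_simp; ring
  have hmaps : (S : Set ℕ).MapsTo (fun m => (r m).den) (Finset.Icc 1 Q : Finset ℕ) := by
    intro m _
    simp only [Finset.coe_Icc, Set.mem_Icc]
    exact ⟨(r m).den_pos, hrQ m⟩
  rw [Finset.card_eq_sum_card_fiberwise hmaps, Nat.cast_sum]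
  refine (Finset.sum_le_sum step).trans ?_
  rw [Finset.sum_add_distrib, ← Finset.mul_sum, ← Finset.mul_sum]
  have hs1 : ∑ q ∈ Finset.Icc 1 Q, (q : ℝ) ≤ T ^ 2 := by
    calc ∑ q ∈ Finset.Icc 1 Q, (q : ℝ) ≤ ∑ q ∈ Finset.Icc 1 Q, (Q : ℝ) := by
          apply Finset.sum_le_sum
          intro q hq
          exact_mod_cast (Finset.mem_Icc.mp hq).2
      _ = Q * Q := by simp
      _ ≤ T * T := by gcongr
      _ = T ^ 2 := by ring
  have hs2 : ∑ q ∈ Finset.Icc 1 Q, (1 / (q : ℝ)) ≤ 1 + Real.log T := by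
    have h := harmonic_le_one_add_log Q
    rw [harmonic_eq_sum_Icc] at h
    push_cast at h
    simp only [one_div]
    have : Real.log Q ≤ Real.log T := Real.log_le_log (by linarith) hQT
    linarith
  have hlog : 0 ≤ Real.log T := Real.log_nonneg hT
  calc 4 * X * ∑ q ∈ Finset.Icc 1 Q, (q : ℝ)
        + 24 * (X * T ^ 2) * ∑ q ∈ Finset.Icc 1 Q, (1 / (q : ℝ))
      ≤ 4 * X * T ^ 2 + 24 * (X * T ^ 2) * (1 + Real.log T) := by gcongr
    _ ≤ 28 * (X * T ^ 2) * (1 + Real.log T) := by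
        have : 0 ≤ X * T ^ 2 * Real.log T := by positivity
        nlinarith
    _ = _ := by rw [hXT]

/-- The summand. -/
noncomputable def summand (x : ℝ) (u : ℕ) : ℝ := (u : ℝ) * (Int.fract (x / (u : ℝ) ^ 2) - 1 / 2)

lemma abs_fract_half (t : ℝ) : |Int.fract t - 1 / 2| ≤ 1 / 2 := by
  have := Int.fract_nonneg t
  have := Int.fract_lt_one t
  rw [abs_le]; constructor <;> linarith

lemma trivial_bound (x : ℝ) (U a b : ℕ) (hab : a ≤ b) (hb : b ≤ 2 * U + 1) :
    |∑ u ∈ Finset.Ico a b, summand x u| ≤ ((b : ℝ) - a) * U := by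
  calc |∑ u ∈ Finset.Ico a b, summand x u| ≤ ∑ u ∈ Finset.Ico a b, |summand x u| :=
        Finset.abs_sum_le_sum_abs _ _
    _ ≤ ∑ u ∈ Finset.Ico a b, (U : ℝ) := by
        apply Finset.sum_le_sum
        intro u hu
        have h1 : u ≤ 2 * U := by have := (Finset.mem_Ico.mp hu).2; omega
        have h2 : (u : ℝ) ≤ 2 * U := by exact_mod_cast h1
        unfold summand
        rw [abs_mul, abs_of_nonneg (Nat.cast_nonneg u)]
        calc (u : ℝ) * |Int.fract (x / (u : ℝ) ^ 2) - 1 / 2| ≤ (2 * U) * (1 / 2) := by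
              gcongr
              exact abs_fract_half _
          _ = U := by ring
    _ = _ := by
        rw [Finset.sum_const, Nat.card_Ico, nsmul_eq_mul, Nat.cast_sub hab]

lemma block_bound (x T : ℝ) (U m Q : ℕ) (hx : 0 < x) (hU : 0 < U) (hUx : (U : ℝ) ^ 3 ≤ x)
    (hT : 1 ≤ T) (hTx : T ^ 3 * x = (U : ℝ) ^ 4) (hQT : (Q : ℝ) ≤ T) (hTQ : T < Q + 1)
    (r : ℚ) (hr : |2 * x / (m : ℝ) ^ 3 - r| ≤ 1 / (((Q : ℝ) + 1) * (r.den : ℝ))) (hrQ : r.den ≤ Q)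
    (hm1 : U ≤ m) (hm2 : m ≤ 2 * U) :
    |∑ u ∈ Finset.Ico m (m + r.den), summand x u| ≤ 18 * U := by
  have hU' : (0 : ℝ) < U := by exact_mod_cast hU
  have hT0 : 0 < T := by linarith
  have hm1' : (U : ℝ) ≤ m := by exact_mod_cast hm1
  have hm2' : (m : ℝ) ≤ 2 * U := by exact_mod_cast hm2
  have hm0 : (0 : ℝ) < m := by linarith
  have hT3 : T ^ 3 ≤ U := by
    have : T ^ 3 * x ≤ U * x := by
      rw [hTx]
      calc (U : ℝ) ^ 4 = U * U ^ 3 := by ring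
        _ ≤ U * x := by gcongr
    exact le_of_mul_le_mul_right this hx
  set q := r.den with hq
  have hq0 : 0 < q := r.den_pos
  have hq0' : (0 : ℝ) < q := by exact_mod_cast hq0
  have hqT : (q : ℝ) ≤ T := by
    have : (q : ℝ) ≤ Q := by exact_mod_cast hrQ
    linarith
  have hcop : IsCoprime (-r.num) (q : ℤ) := by
    apply IsCoprime.neg_left
    rw [Int.isCoprime_iff_gcd_eq_one]
    have := r.reduced
    simpa [Int.gcd, Nat.Coprime] using this
  have hrd : (r : ℝ) = r.num / q := Rat.cast_def _
  have hb := saw_block q hq0 (-r.num) hcop (x / (m : ℝ) ^ 2) 4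
    (fun j => x / ((m + j : ℕ) : ℝ) ^ 2) (by
      intro j hj
      have hjq : (j : ℝ) ≤ q := by
        have := Finset.mem_range.mp hj
        exact_mod_cast this.le
      have hj0 : (0 : ℝ) ≤ j := Nat.cast_nonneg j
      have e : x / ((m + j : ℕ) : ℝ) ^ 2 - (x / (m : ℝ) ^ 2 + ((-r.num : ℤ) : ℝ) * j / q)
          = x * j ^ 2 * (3 * m + 2 * j) / ((m : ℝ) ^ 3 * (m + j) ^ 2)
            - j * (2 * x / (m : ℝ) ^ 3 - r) := by
        rw [hrd]; push_cast
        have : (0 : ℝ) < m + j := by linarith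
        field_simp
        ring
      have h1 : x * j ^ 2 * (3 * m + 2 * j) / ((m : ℝ) ^ 3 * (m + j) ^ 2) ≤ 3 / q := by
        calc x * j ^ 2 * (3 * m + 2 * j) / ((m : ℝ) ^ 3 * (m + j) ^ 2)
            ≤ x * j ^ 2 * (3 * (m + j)) / ((m : ℝ) ^ 3 * (m + j) ^ 2) := by gcongr; linarith
          _ = 3 * x * j ^ 2 / ((m : ℝ) ^ 3 * (m + j)) := by
              have : (0 : ℝ) < m + j := by linarith
              field_simp
          _ ≤ 3 * x * q ^ 2 / ((U : ℝ) ^ 3 * U) := by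
              gcongr; linarith
          _ = 3 * x * q ^ 2 / (T ^ 3 * x) := by rw [hTx]; ring
          _ = 3 * q ^ 2 / T ^ 3 := by field_simp
          _ ≤ 3 * q ^ 2 / q ^ 3 := by gcongr
          _ = 3 / q := by field_simp
      have h0 : 0 ≤ x * j ^ 2 * (3 * m + 2 * j) / ((m : ℝ) ^ 3 * (m + j) ^ 2) := by positivity
      have h2 : |(j : ℝ) * (2 * x / (m : ℝ) ^ 3 - r)| ≤ 1 / (q : ℝ) := by
        rw [abs_mul, abs_of_nonneg hj0]
        calc (j : ℝ) * |2 * x / (m : ℝ) ^ 3 - r| ≤ q * (1 / ((Q + 1) * q)) := by gcongr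
          _ = 1 / (Q + 1) := by field_simp
          _ ≤ 1 / q := by
              apply one_div_le_one_div_of_le hq0'
              linarith
      have h3 := abs_le.mp h2
      have e4 : (4 : ℝ) / q = 3 / q + 1 / q := by ring
      have e3 : 0 ≤ (3 : ℝ) / q := by positivity
      show |x / ((m + j : ℕ) : ℝ) ^ 2 - (x / (m : ℝ) ^ 2 + ((-r.num : ℤ) : ℝ) * j / q)| ≤ 4 / q
      rw [e, e4, abs_le]
      constructor <;> linarith)
  have hsplit : ∑ u ∈ Finset.Ico m (m + q), summand x u
      = m * ∑ j ∈ Finset.range q, (Int.fract (x / ((m + j : ℕ) : ℝ) ^ 2) - 1 / 2)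
        + ∑ j ∈ Finset.range q, (j : ℝ) * (Int.fract (x / ((m + j : ℕ) : ℝ) ^ 2) - 1 / 2) := by
    rw [Finset.sum_Ico_eq_sum_range, Nat.add_sub_cancel_left, Finset.mul_sum,
      ← Finset.sum_add_distrib]
    apply Finset.sum_congr rfl
    intro j _
    unfold summand
    push_cast
    ring
  have h2 : |∑ j ∈ Finset.range q, (j : ℝ) * (Int.fract (x / ((m + j : ℕ) : ℝ) ^ 2) - 1 / 2)|
      ≤ U := by
    calc _ ≤ ∑ j ∈ Finset.range q, |(j : ℝ) * (Int.fract (x / ((m + j : ℕ) : ℝ) ^ 2) - 1 / 2)| :=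
          Finset.abs_sum_le_sum_abs _ _
      _ ≤ ∑ j ∈ Finset.range q, (q : ℝ) * (1 / 2) := by
          apply Finset.sum_le_sum
          intro j hj
          have hjq : (j : ℝ) ≤ q := by
            have := Finset.mem_range.mp hj
            exact_mod_cast this.le
          rw [abs_mul, abs_of_nonneg (Nat.cast_nonneg j)]
          gcongr
          exact abs_fract_half _
      _ = q * q * (1 / 2) := by simp; ring
      _ ≤ T * T * 1 := by gcongr; norm_num
      _ = T ^ 2 := by ring
      _ ≤ T ^ 3 := pow_le_pow_right₀ hT (by norm_num)
      _ ≤ U := hT3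
  rw [hsplit]
  refine (abs_add_le _ _).trans ?_
  rw [abs_mul, abs_of_pos hm0]
  have h3 : (m : ℝ) * |∑ j ∈ Finset.range q, (Int.fract (x / ((m + j : ℕ) : ℝ) ^ 2) - 1 / 2)|
      ≤ (2 * U) * (1 / 2 + 2 * 4) := by gcongr
  linarith

lemma dyadic (x T : ℝ) (U B : ℕ) (hx : 2 ≤ x) (hU : 0 < U) (hUx : (U : ℝ) ^ 3 ≤ x)
    (hT0 : 0 < T) (hTx : T ^ 3 * x = (U : ℝ) ^ 4) (hUB : U ≤ B) (hB : B ≤ 2 * U + 1) :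
    |∑ u ∈ Finset.Ico U B, summand x u| ≤ 1600 * ((U : ℝ) ^ 2 / T) * Real.log x := by
  have hU' : (1 : ℝ) ≤ U := by exact_mod_cast hU
  have hx0 : 0 < x := by linarith
  have hlx : 1 / 2 ≤ Real.log x := by
    have := Real.log_two_gt_d9
    have : Real.log 2 ≤ Real.log x := Real.log_le_log (by norm_num) hx
    linarith
  have hUT : 0 ≤ (U : ℝ) ^ 2 / T := by positivity
  rcases lt_or_ge T 1 with hT | hT
  · have h := trivial_bound x U U B hUB hB
    have hB' : (B : ℝ) ≤ 2 * U + 1 := by exact_mod_cast hB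
    have h1 : ((B : ℝ) - U) * U ≤ 2 * U ^ 2 := by nlinarith
    have h2 : (U : ℝ) ^ 2 ≤ U ^ 2 / T := by
      rw [le_div_iff₀ hT0]; nlinarith [sq_nonneg (U : ℝ)]
    nlinarith
  · have hT3 : T ^ 3 ≤ U := by
      have : T ^ 3 * x ≤ U * x := by
        rw [hTx]
        calc (U : ℝ) ^ 4 = U * U ^ 3 := by ring
          _ ≤ U * x := by gcongr
      exact le_of_mul_le_mul_right this hx0
    have hTU : T ^ 2 ≤ U := (pow_le_pow_right₀ hT (by norm_num)).trans hT3
    have hTlex : T ≤ x := by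
      have h1 : T ≤ T ^ 3 := le_self_pow₀ hT (by norm_num)
      have h2 : (U : ℝ) ≤ U ^ 3 := le_self_pow₀ hU' (by norm_num)
      linarith
    set Q := ⌊T⌋₊ with hQ
    have hQT : (Q : ℝ) ≤ T := Nat.floor_le hT0.le
    have hTQ : T < Q + 1 := Nat.lt_floor_add_one T
    have hQ0 : 0 < Q := Nat.floor_pos.mpr hT
    choose r hr hrQ using fun m : ℕ =>
      Real.exists_rat_abs_sub_le_and_den_le (2 * x / (m : ℝ) ^ 3) hQ0
    obtain ⟨S, hS1, hS2, hS3⟩ := greedy (summand x) (fun m => (r m).den)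
      (fun m => (r m).den_pos) (18 * U) (T * U) (by positivity) B (B - U) U le_rfl hUB
      (by
        intro m hm hmB
        have hd := (r m).den_pos
        exact block_bound x T U m Q hx0 hU hUx hT hTx hQT hTQ (r m) (hr m) (hrQ m) hm
          (by omega))
      (by
        intro m hm hmB hlt
        refine (trivial_bound x U m B hmB hB).trans ?_
        have h1 : B ≤ m + Q := by have := hrQ m; omega
        have h2 : (B : ℝ) ≤ m + Q := by exact_mod_cast h1
        gcongr
        linarith)
    have hc := count_blocks x T U Q hx0 hU hUx hT hTx hQT hTQ r hr hrQ S
      (fun m hm => by have := hS1 m hm; omega) hS2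
    have hlT : Real.log T ≤ Real.log x := Real.log_le_log hT0 hTlex
    have hlT0 : 0 ≤ Real.log T := Real.log_nonneg hT
    have h1 : T * U ≤ U ^ 2 / T := by
      rw [le_div_iff₀ hT0]
      nlinarith
    calc _ ≤ 18 * U * (S.card : ℝ) + T * U := hS3
      _ ≤ 18 * U * (28 * (U / T) * (3 * Real.log x)) + (U : ℝ) ^ 2 / T * (2 * Real.log x) := by
          apply add_le_add
          · apply mul_le_mul_of_nonneg_left _ (by positivity)
            refine hc.trans ?_
            gcongr
            linarith
          · nlinarith
      _ = 1514 * ((U : ℝ) ^ 2 / T * Real.log x) := by ring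
      _ ≤ 1600 * ((U : ℝ) ^ 2 / T * Real.log x) := by
          have : 0 ≤ (U : ℝ) ^ 2 / T * Real.log x := by positivity
          linarith
      _ = _ := by ring

lemma dyadic_sum (x : ℝ) (hx : 2 ≤ x) : ∀ N : ℕ, (N : ℝ) ^ 3 ≤ x →
    |∑ u ∈ Finset.Ico 1 (N + 1), summand x u|
      ≤ 4800 * (x ^ ((1 : ℝ) / 3) * (N : ℝ) ^ ((2 : ℝ) / 3)) * Real.log x := by
  intro N
  have hx0 : 0 < x := by linarith
  have hlx : 0 ≤ Real.log x := Real.log_nonneg (by linarith)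
  induction N using Nat.strong_induction_on with
  | _ N ih =>
    intro hN
    rcases Nat.eq_zero_or_pos N with rfl | hN0
    · simp
    set U := (N + 1) / 2 with hU
    have hU1 : 1 ≤ U := by omega
    have hUN : U ≤ N := by omega
    have hUN' : (U : ℝ) ≤ N := by exact_mod_cast hUN
    have hU0 : (0 : ℝ) < U := by exact_mod_cast hU1
    have hN0' : (0 : ℝ) < N := by exact_mod_cast hN0
    set V := U - 1 with hV
    have hVU : V + 1 = U := by omega
    have hV2 : ((V : ℕ) : ℝ) ≤ N / 2 := by
      have : 2 * V ≤ N := by omega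
      have h : (2 : ℝ) * V ≤ N := by exact_mod_cast this
      linarith
    have hV3 : (V : ℝ) ^ 3 ≤ x := by
      refine le_trans ?_ hN
      gcongr
      linarith
    have h1 := ih V (by omega) hV3
    rw [hVU] at h1
    set T : ℝ := (U : ℝ) ^ ((4 : ℝ) / 3) / x ^ ((1 : ℝ) / 3) with hT
    have hT0 : 0 < T := by positivity
    have hTx : T ^ 3 * x = (U : ℝ) ^ 4 := by
      rw [hT, div_pow, ← Real.rpow_natCast, ← Real.rpow_natCast, ← Real.rpow_mul hU0.le,
        ← Real.rpow_mul hx0.le]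
      norm_num
      field_simp
    have h2 := dyadic x T U (N + 1) hx hU1 (le_trans (by gcongr) hN) hT0 hTx (by omega) (by omega)
    have hUT : (U : ℝ) ^ 2 / T = x ^ ((1 : ℝ) / 3) * (U : ℝ) ^ ((2 : ℝ) / 3) := by
      rw [hT]
      have : (U : ℝ) ^ 2 = (U : ℝ) ^ ((2 : ℝ) / 3) * (U : ℝ) ^ ((4 : ℝ) / 3) := by
        rw [← Real.rpow_add hU0]; norm_num
      rw [this]
      field_simp
    rw [hUT] at h2
    rw [← Finset.sum_Ico_consecutive _ hU1 (show U ≤ N + 1 by omega)]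
    refine (abs_add_le _ _).trans ?_
    have hA : (U : ℝ) ^ ((2 : ℝ) / 3) ≤ (N : ℝ) ^ ((2 : ℝ) / 3) := by gcongr
    have hc : ((1 : ℝ) / 2) ^ ((2 : ℝ) / 3) ≤ 2 / 3 := by
      have h : (((1 : ℝ) / 2) ^ ((2 : ℝ) / 3)) ^ 3 ≤ (2 / 3 : ℝ) ^ 3 := by
        rw [← Real.rpow_natCast, ← Real.rpow_mul (by norm_num)]
        norm_num
      exact le_of_pow_le_pow_left₀ (by norm_num) (by norm_num) h
    have hB : (V : ℝ) ^ ((2 : ℝ) / 3) ≤ (2 / 3) * (N : ℝ) ^ ((2 : ℝ) / 3) := by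
      calc (V : ℝ) ^ ((2 : ℝ) / 3) ≤ ((1 / 2) * (N : ℝ)) ^ ((2 : ℝ) / 3) := by
            gcongr; linarith
        _ = ((1 : ℝ) / 2) ^ ((2 : ℝ) / 3) * (N : ℝ) ^ ((2 : ℝ) / 3) := by
            rw [Real.mul_rpow (by norm_num) hN0'.le]
        _ ≤ _ := by gcongr
    calc _ ≤ 4800 * (x ^ ((1 : ℝ) / 3) * (V : ℝ) ^ ((2 : ℝ) / 3)) * Real.log x
          + 1600 * (x ^ ((1 : ℝ) / 3) * (U : ℝ) ^ ((2 : ℝ) / 3)) * Real.log x := add_le_add h1 h2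
      _ ≤ 4800 * (x ^ ((1 : ℝ) / 3) * ((2 / 3) * (N : ℝ) ^ ((2 : ℝ) / 3))) * Real.log x
          + 1600 * (x ^ ((1 : ℝ) / 3) * (N : ℝ) ^ ((2 : ℝ) / 3)) * Real.log x := by gcongr
      _ = _ := by ring

theorem stmt18 : ∃ C : ℝ, ∀ x : ℝ, 2 ≤ x →
    |∑ u ∈ Finset.Icc 1 ⌊x ^ ((1 : ℝ) / 3)⌋₊,
        (u : ℝ) * (Int.fract (x / (u : ℝ) ^ 2) - 1 / 2)|
      ≤ C * x ^ ((5 : ℝ) / 9) * Real.log x := by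
  refine ⟨4800, fun x hx => ?_⟩
  have hx0 : 0 < x := by linarith
  have hlx : 0 ≤ Real.log x := Real.log_nonneg (by linarith)
  set N := ⌊x ^ ((1 : ℝ) / 3)⌋₊ with hN
  have hNx : (N : ℝ) ≤ x ^ ((1 : ℝ) / 3) := Nat.floor_le (by positivity)
  have hN3 : (N : ℝ) ^ 3 ≤ x := by
    calc (N : ℝ) ^ 3 ≤ (x ^ ((1 : ℝ) / 3)) ^ 3 := by gcongr
      _ = x := by
        rw [← Real.rpow_natCast, ← Real.rpow_mul hx0.le]
        norm_num
  have h := dyadic_sum x hx N hN3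
  have hI : Finset.Ico 1 (N + 1) = Finset.Icc 1 N := by
    ext u; simp only [Finset.mem_Ico, Finset.mem_Icc]; omega
  rw [hI] at h
  unfold summand at h
  refine h.trans ?_
  have h2 : x ^ ((1 : ℝ) / 3) * (N : ℝ) ^ ((2 : ℝ) / 3) ≤ x ^ ((5 : ℝ) / 9) := by
    calc x ^ ((1 : ℝ) / 3) * (N : ℝ) ^ ((2 : ℝ) / 3)
        ≤ x ^ ((1 : ℝ) / 3) * (x ^ ((1 : ℝ) / 3)) ^ ((2 : ℝ) / 3) := by gcongr
      _ = x ^ ((5 : ℝ) / 9) := by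
        rw [← Real.rpow_mul hx0.le, ← Real.rpow_add hx0]
        norm_num
  gcongr
end
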